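/- Let 𝚫 ∈ 𝒜. Then there exists a gentle quiver 𝚫' without branch relations which is reflection-equivalent to 𝚫 (i.e. obtained from 𝚫 by a finite sequence of reflections and coreflections). -/

import Mathlib

/-! Common formalization infrastructure for gentle quivers (Bobinski–Buan,
    "Derived equivalence classification of gentle cluster tilted algebras"). -/

/-- A (finite) quiver with (length-two, monomial) relations.  Vertices and
arrows are natural numbers; `V` and `A` are the finite sets of vertices and
arrows, `src`/`tgt` give the start and terminus of each arrow, and `rel` is the
set of relations, a relation `(a, b)` standing for the length-two path
`a·b` (so `src a = tgt b`). -/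
structure QuivRel where
  V : Finset ℕ
  A : Finset ℕ
  src : ℕ → ℕ
  tgt : ℕ → ℕ
  rel : Finset (ℕ × ℕ)

namespace GentleQuiv

/-- Two vertices are adjacent if some arrow joins them (in either direction). -/
def Adj (Q : QuivRel) (x y : ℕ) : Prop :=
  ∃ a ∈ Q.A, (Q.src a = x ∧ Q.tgt a = y) ∨ (Q.src a = y ∧ Q.tgt a = x)

/-- A quiver is connected if any two of its vertices are joined by a walk. -/
def Connected (Q : QuivRel) : Prop :=
  ∀ x ∈ Q.V, ∀ y ∈ Q.V, Relation.ReflTransGen (Adj Q) x y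

/-- `l = [α₁, …, αₙ]` is a (nonempty) path in the quiver: consecutive arrows
compose, i.e. `s αᵢ = t αᵢ₊₁`. -/
def IsPathList (Q : QuivRel) (l : List ℕ) : Prop :=
  l ≠ [] ∧ (∀ a ∈ l, a ∈ Q.A) ∧ l.Chain' (fun a b => Q.src a = Q.tgt b)

/-- The path `l` contains a subpath (two consecutive arrows) lying in `R`. -/
def HasRelSubpath (Q : QuivRel) (l : List ℕ) : Prop :=
  ∃ a b, (a, b) ∈ Q.rel ∧ [a, b] <:+: l

/-- Gentle quiver: connected, relations are composable pairs of arrows, at most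
two arrows in/out of every vertex, the usual gentleness conditions on
relations, and a global bound forcing finite dimensionality. -/
def IsGentle (Q : QuivRel) : Prop :=
  Q.V.Nonempty ∧
  (∀ a ∈ Q.A, Q.src a ∈ Q.V ∧ Q.tgt a ∈ Q.V) ∧
  Connected Q ∧
  (∀ ρ ∈ Q.rel, ρ.1 ∈ Q.A ∧ ρ.2 ∈ Q.A ∧ Q.src ρ.1 = Q.tgt ρ.2) ∧
  (∀ x, (Q.A.filter fun a => Q.src a = x).card ≤ 2) ∧
  (∀ x, (Q.A.filter fun a => Q.tgt a = x).card ≤ 2) ∧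
  (∀ a ∈ Q.A, (Q.A.filter fun b => Q.src b = Q.tgt a ∧ (b, a) ∉ Q.rel).card ≤ 1) ∧
  (∀ a ∈ Q.A, (Q.A.filter fun c => Q.tgt c = Q.src a ∧ (a, c) ∉ Q.rel).card ≤ 1) ∧
  (∀ a ∈ Q.A, (Q.A.filter fun b => (b, a) ∈ Q.rel).card ≤ 1) ∧
  (∀ a ∈ Q.A, (Q.A.filter fun c => (a, c) ∈ Q.rel).card ≤ 1) ∧
  (∃ n : ℕ, ∀ l : List ℕ, IsPathList Q l → l.length = n → HasRelSubpath Q l)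

/-- A choice of functions `σ, τ : Δ₁ → {±1}` as in Avella-Alaminos–Geiss. -/
structure SigmaTau (Q : QuivRel) where
  σ : ℕ → ℤ
  τ : ℕ → ℤ
  σ_pm : ∀ a ∈ Q.A, σ a = 1 ∨ σ a = -1
  τ_pm : ∀ a ∈ Q.A, τ a = 1 ∨ τ a = -1
  σ_src : ∀ a ∈ Q.A, ∀ b ∈ Q.A, a ≠ b → Q.src a = Q.src b → σ a = -σ b
  τ_tgt : ∀ a ∈ Q.A, ∀ b ∈ Q.A, a ≠ b → Q.tgt a = Q.tgt b → τ a = -τ b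
  rel_iff : ∀ a ∈ Q.A, ∀ b ∈ Q.A, Q.src a = Q.tgt b → ((a, b) ∈ Q.rel ↔ σ a = τ b)

/-- A thread: either a trivial path/antipath `1_{x,ε}` at a vertex `x` with a
sign `ε`, or a sequence of arrows of positive length. -/
inductive Thread where
  | triv (x : ℕ) (ε : ℤ) : Thread
  | arrows (l : List ℕ) : Thread
deriving DecidableEq

/-- Source of a thread. -/
def Thread.source (Q : QuivRel) : Thread → ℕ
  | .triv x _ => x
  | .arrows l => Q.src l.getLast!

/-- Target of a thread. -/
def Thread.target (Q : QuivRel) : Thread → ℕ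
  | .triv x _ => x
  | .arrows l => Q.tgt l.head!

/-- `σω` (for paths and antipaths alike; `σ 1_{x,ε} = ε = σ 1'_{x,ε}`). -/
def Thread.sigma {Q : QuivRel} (st : SigmaTau Q) : Thread → ℤ
  | .triv _ ε => ε
  | .arrows l => st.σ l.getLast!

/-- `τω` when `ω` is regarded as a path (`τ 1_{x,ε} = -ε`). -/
def Thread.tauPath {Q : QuivRel} (st : SigmaTau Q) : Thread → ℤ
  | .triv _ ε => -ε
  | .arrows l => st.τ l.head!

/-- `τω` when `ω` is regarded as an antipath (`τ 1'_{x,ε} = ε`). -/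
def Thread.tauAnti {Q : QuivRel} (st : SigmaTau Q) : Thread → ℤ
  | .triv _ ε => ε
  | .arrows l => st.τ l.head!

/-- Length of a thread. -/
def Thread.len : Thread → ℕ
  | .triv _ _ => 0
  | .arrows l => l.length

/-- A path in `𝚫` of positive length (no two consecutive arrows in `R`). -/
def IsPermList (Q : QuivRel) (l : List ℕ) : Prop :=
  IsPathList Q l ∧ l.Chain' (fun a b => (a, b) ∉ Q.rel)

/-- An antipath in `𝚫` of positive length (all consecutive pairs in `R`). -/
def IsAntiList (Q : QuivRel) (l : List ℕ) : Prop :=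
  l ≠ [] ∧ (∀ a ∈ l, a ∈ Q.A) ∧ l.Chain' (fun a b => (a, b) ∈ Q.rel)

/-- A thread is a path in `𝚫` (including trivial ones). -/
def IsPathThread (Q : QuivRel) : Thread → Prop
  | .triv x ε => x ∈ Q.V ∧ (ε = 1 ∨ ε = -1)
  | .arrows l => IsPermList Q l

/-- A thread is an antipath in `𝚫` (including trivial ones). -/
def IsAntiThread (Q : QuivRel) : Thread → Prop
  | .triv x ε => x ∈ Q.V ∧ (ε = 1 ∨ ε = -1)
  | .arrows l => IsAntiList Q l

/-- `w ∈ ℳ`: `w` is a maximal path of `𝚫`. -/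
def InM (Q : QuivRel) (st : SigmaTau Q) (w : Thread) : Prop :=
  IsPathThread Q w ∧
  (¬ ∃ a ∈ Q.A, Q.src a = w.target Q ∧ st.σ a = -(w.tauPath st)) ∧
  (¬ ∃ b ∈ Q.A, Q.tgt b = w.source Q ∧ st.τ b = -(w.sigma st))

/-- `w ∈ 𝒩`: `w` is a maximal antipath of `𝚫`. -/
def InN (Q : QuivRel) (st : SigmaTau Q) (w : Thread) : Prop :=
  IsAntiThread Q w ∧
  (¬ ∃ a ∈ Q.A, Q.src a = w.target Q ∧ st.σ a = w.tauAnti st) ∧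
  (¬ ∃ b ∈ Q.A, Q.tgt b = w.source Q ∧ st.τ b = w.sigma st)

/-- The graph of the bijection `Φ = φ ∘ ψ : 𝒩 → 𝒩`:  `PhiRel Q st w w'` holds
iff `w, w' ∈ 𝒩` and the maximal path `ψ w` (with `s(ψw) = sw`, `σ(ψw) = -σw`)
satisfies `t w' = t (ψ w)` and `τ w' = -τ(ψ w)`, i.e. `w' = φ (ψ w) = Φ w`. -/
def PhiRel (Q : QuivRel) (st : SigmaTau Q) (w w' : Thread) : Prop :=
  InN Q st w ∧ InN Q st w' ∧
  ∃ m : Thread, InM Q st m ∧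
    m.source Q = w.source Q ∧ m.sigma st = -(w.sigma st) ∧
    w'.target Q = m.target Q ∧ w'.tauAnti st = -(m.tauPath st)

/-- `O` is an orbit of the `ℤ`-action on `𝒩` induced by `Φ`. -/
def NOrbit (Q : QuivRel) (st : SigmaTau Q) (O : Set Thread) : Prop :=
  ∃ w, InN Q st w ∧ O = {w' | Relation.EqvGen (PhiRel Q st) w w'}

/-- `p(𝒪) = |𝒪|` for an orbit `𝒪 ∈ 𝒩/ℤ`. -/
noncomputable def pN (O : Set Thread) : ℕ := O.ncard

/-- `q(𝒪) = Σ_{ω ∈ 𝒪} ℓ(ω)` for an orbit `𝒪 ∈ 𝒩/ℤ`. -/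
noncomputable def qN (O : Set Thread) : ℕ := ∑ᶠ w ∈ O, Thread.len w

/-- `a ∈ 𝒞`: the arrow `a` occurs in no maximal antipath. -/
def InC (Q : QuivRel) (st : SigmaTau Q) (a : ℕ) : Prop :=
  a ∈ Q.A ∧ ¬ ∃ l : List ℕ, InN Q st (.arrows l) ∧ a ∈ l

/-- The graph of the bijection `Ψ : 𝒞 → 𝒞`. -/
def PsiRel (Q : QuivRel) (st : SigmaTau Q) (a b : ℕ) : Prop :=
  InC Q st a ∧ InC Q st b ∧ Q.tgt b = Q.src a ∧ st.τ b = st.σ a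

/-- `O` is an orbit of the `ℤ`-action on `𝒞` induced by `Ψ`. -/
def COrbit (Q : QuivRel) (st : SigmaTau Q) (O : Set ℕ) : Prop :=
  ∃ a, InC Q st a ∧ O = {b | Relation.EqvGen (PsiRel Q st) a b}

/-- The Avella-Alaminos–Geiss invariant `f_𝚫 : ℕ² → ℕ`:  `f_𝚫 (p,q)` counts the
orbits `𝒪 ∈ 𝒩/ℤ ⊔ 𝒞/ℤ` with `p(𝒪) = p` and `q(𝒪) = q`. -/
noncomputable def fInv (Q : QuivRel) (st : SigmaTau Q) : ℕ × ℕ → ℕ := fun pq =>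
  {O : Set Thread | NOrbit Q st O ∧ pN O = pq.1 ∧ qN O = pq.2}.ncard +
  {O : Set ℕ | COrbit Q st O ∧ pq.1 = 0 ∧ O.ncard = pq.2}.ncard

/-- `[p, q] : ℕ² → ℕ`, the characteristic function of `{(p, q)}`. -/
def charFn (p q : ℕ) : ℕ × ℕ → ℕ := fun pq => if pq = (p, q) then 1 else 0

/-- Tree type: `|Δ₀| = |Δ₁| + 1`. -/
def TreeType (Q : QuivRel) : Prop := Q.V.card = Q.A.card + 1

/-- Removing a set of arrows (keeping all vertices); relations containing a
removed arrow are discarded. -/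
def deleteArrows (Q : QuivRel) (S : Finset ℕ) : QuivRel where
  V := Q.V
  A := Q.A \ S
  src := Q.src
  tgt := Q.tgt
  rel := Q.rel.filter fun ρ => ρ.1 ∉ S ∧ ρ.2 ∉ S

/-- Branch arrow: removing it disconnects the quiver. -/
def BranchArrow (Q : QuivRel) (a : ℕ) : Prop :=
  a ∈ Q.A ∧ ¬ Connected (deleteArrows Q {a})

/-- Cycle arrow: removing it leaves the quiver connected. -/
def CycleArrow (Q : QuivRel) (a : ℕ) : Prop :=
  a ∈ Q.A ∧ Connected (deleteArrows Q {a})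

/-- Branch relation: a relation one of whose arrows is a branch arrow. -/
def BranchRel (Q : QuivRel) (ρ : ℕ × ℕ) : Prop :=
  ρ ∈ Q.rel ∧ (BranchArrow Q ρ.1 ∨ BranchArrow Q ρ.2)

/-- A relation `ρ = (α, β)` is isolated if the antipath `(α, β)` is a maximal
antipath, i.e. `ρ ∈ 𝒩`. -/
def Isolated (Q : QuivRel) (st : SigmaTau Q) (ρ : ℕ × ℕ) : Prop :=
  ρ ∈ Q.rel ∧ InN Q st (.arrows [ρ.1, ρ.2])

/-- `Q'` is obtained from `Q` by completing the relations from `R₀`, the new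
arrow attached to `ρ ∈ R₀` being `γ ρ`. -/
structure IsCompletion (Q : QuivRel) (R0 : Finset (ℕ × ℕ)) (γ : ℕ × ℕ → ℕ)
    (Q' : QuivRel) : Prop where
  subset : R0 ⊆ Q.rel
  fresh : ∀ ρ ∈ R0, γ ρ ∉ Q.A
  inj : ∀ ρ ∈ R0, ∀ ρ' ∈ R0, γ ρ = γ ρ' → ρ = ρ'
  V_eq : Q'.V = Q.V
  A_eq : Q'.A = Q.A ∪ R0.image γ
  src_old : ∀ a ∈ Q.A, Q'.src a = Q.src a
  tgt_old : ∀ a ∈ Q.A, Q'.tgt a = Q.tgt a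
  src_new : ∀ ρ ∈ R0, Q'.src (γ ρ) = Q.tgt ρ.1
  tgt_new : ∀ ρ ∈ R0, Q'.tgt (γ ρ) = Q.src ρ.2
  rel_eq : Q'.rel = Q.rel ∪ R0.image (fun ρ => (γ ρ, ρ.1)) ∪
      R0.image (fun ρ => (ρ.2, γ ρ))

/-- A 3-cycle: three pairwise distinct arrows forming an oriented cycle. -/
def Is3Cycle (Q : QuivRel) (a0 a1 a2 : ℕ) : Prop :=
  a0 ∈ Q.A ∧ a1 ∈ Q.A ∧ a2 ∈ Q.A ∧ a0 ≠ a1 ∧ a1 ≠ a2 ∧ a0 ≠ a2 ∧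
  Q.src a0 = Q.tgt a1 ∧ Q.src a1 = Q.tgt a2 ∧ Q.src a2 = Q.tgt a0

/-- A triangle: a 3-cycle all of whose three compositions are relations. -/
def IsTriangleTriple (Q : QuivRel) (a0 a1 a2 : ℕ) : Prop :=
  Is3Cycle Q a0 a1 a2 ∧ (a0, a1) ∈ Q.rel ∧ (a1, a2) ∈ Q.rel ∧ (a2, a0) ∈ Q.rel

/-- The (unordered) set of arrows of a triangle. -/
def TriangleSet (Q : QuivRel) (O : Finset ℕ) : Prop :=
  ∃ a0 a1 a2, O = {a0, a1, a2} ∧ IsTriangleTriple Q a0 a1 a2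

/-- Branch triangle: removing any two of its arrows disconnects the quiver. -/
def BranchTriangle (Q : QuivRel) (O : Finset ℕ) : Prop :=
  TriangleSet Q O ∧ ∀ S ⊆ O, S.card = 2 → ¬ Connected (deleteArrows Q S)

/-- Free relation: a relation neither of whose arrows lies in `𝒞`. -/
def FreeRel (Q : QuivRel) (st : SigmaTau Q) (ρ : ℕ × ℕ) : Prop :=
  ρ ∈ Q.rel ∧ ¬ InC Q st ρ.1 ∧ ¬ InC Q st ρ.2

/-- The class `𝒜`: gentle quivers with `f_𝚫 = m·[0,3] + [p+m+2, p]`. -/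
def ClassA (Q : QuivRel) (st : SigmaTau Q) : Prop :=
  IsGentle Q ∧ ∃ m p : ℕ, ∀ x, fInv Q st x = m * charFn 0 3 x + charFn (p + m + 2) p x

/-- The class `Ã`: gentle quivers with
`f_𝚫 = (m₁+m₂)·[0,3] + [p+m₁, p] + [q+m₂, q]`, `p+m₁ > 0`, `q+m₂ > 0`. -/
def ClassAtilde (Q : QuivRel) (st : SigmaTau Q) : Prop :=
  IsGentle Q ∧ ∃ m1 m2 p q : ℕ, 0 < p + m1 ∧ 0 < q + m2 ∧
    ∀ x, fInv Q st x =
      (m1 + m2) * charFn 0 3 x + charFn (p + m1) p x + charFn (q + m2) q x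

/-- Isomorphism of quivers with relations. -/
def IsoQR (Q Q' : QuivRel) : Prop :=
  ∃ fV fA : ℕ → ℕ,
    Set.BijOn fV ↑Q.V ↑Q'.V ∧ Set.BijOn fA ↑Q.A ↑Q'.A ∧
    (∀ a ∈ Q.A, Q'.src (fA a) = fV (Q.src a) ∧ Q'.tgt (fA a) = fV (Q.tgt a)) ∧
    (∀ a ∈ Q.A, ∀ b ∈ Q.A, ((a, b) ∈ Q.rel ↔ (fA a, fA b) ∈ Q'.rel))

/-- The quiver has no loops. -/
def NoLoops (Q : QuivRel) : Prop := ∀ a ∈ Q.A, Q.src a ≠ Q.tgt a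

/-- The reflection at `x` is defined: every arrow starting at `x` admits a
(necessarily unique) companion arrow ending at `x` not bound by a relation. -/
def CanReflect (Q : QuivRel) (x : ℕ) : Prop :=
  x ∈ Q.V ∧ ∀ a ∈ Q.A, Q.src a = x → ∃ b ∈ Q.A, Q.tgt b = x ∧ (a, b) ∉ Q.rel

/-- `Q'` is the reflection of the gentle loop-free quiver `Q` at the vertex
`x`, following Brenner–Butler tilting. -/
def IsReflection (Q : QuivRel) (x : ℕ) (Q' : QuivRel) : Prop :=
  IsGentle Q ∧ NoLoops Q ∧ CanReflect Q x ∧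
  Q'.V = Q.V ∧ Q'.A = Q.A ∧
  (∀ a ∈ Q.A, Q.tgt a = x → Q'.src a = x ∧ Q'.tgt a = Q.src a) ∧
  (∀ a ∈ Q.A, Q.src a = x →
    ∀ b ∈ Q.A, Q.tgt b = x → (a, b) ∉ Q.rel → Q'.src a = Q.src b) ∧
  (∀ a ∈ Q.A, Q.tgt a ≠ x → Q.src a ≠ x → Q'.src a = Q.src a) ∧
  (∀ a ∈ Q.A, Q.tgt a ≠ x →
    ((∃ b ∈ Q.A, Q.tgt b = x ∧ Q.src b = Q.tgt a ∧ (b, a) ∈ Q.rel) → Q'.tgt a = x) ∧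
    ((¬ ∃ b ∈ Q.A, Q.tgt b = x ∧ Q.src b = Q.tgt a ∧ (b, a) ∈ Q.rel) →
      Q'.tgt a = Q.tgt a)) ∧
  (∀ a b : ℕ, (a, b) ∈ Q'.rel ↔
    (((a, b) ∈ Q.rel ∧ Q.tgt a ≠ x ∧ Q.src a ≠ x) ∨
     (a ∈ Q.A ∧ b ∈ Q.A ∧ Q.src a = x ∧ Q.tgt b = x ∧ (a, b) ∉ Q.rel) ∨
     (a ∈ Q.A ∧ b ∈ Q.A ∧ Q.tgt a = x ∧
       ∃ c ∈ Q.A, c ≠ a ∧ Q.tgt c = x ∧ Q.src c = Q.tgt b ∧ (c, b) ∈ Q.rel)))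

/-- The opposite quiver with relations. -/
def opQR (Q : QuivRel) : QuivRel where
  V := Q.V
  A := Q.A
  src := Q.tgt
  tgt := Q.src
  rel := Q.rel.image fun ρ => (ρ.2, ρ.1)

/-- Coreflection: the dual of reflection. -/
def IsCoreflection (Q : QuivRel) (x : ℕ) (Q' : QuivRel) : Prop :=
  IsReflection (opQR Q) x (opQR Q')

/-- One step of reflection equivalence: a reflection, a coreflection, or an
isomorphism of quivers with relations. -/
def RefStep (Q Q' : QuivRel) : Prop :=
  (∃ x, IsReflection Q x Q') ∨ (∃ x, IsCoreflection Q x Q') ∨ IsoQR Q Q'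

/-- Reflection equivalence: a finite sequence of reflections/coreflections,
up to isomorphism of quivers with relations. -/
def RefEquiv : QuivRel → QuivRel → Prop := Relation.ReflTransGen RefStep

/-- A cyclic orientation of a `1`-cycle quiver without branch arrows (i.e. a
cycle): enumerations of the vertices and arrows by `ZMod n` such that the
`i`-th arrow joins the `i`-th and `(i+1)`-st vertices. -/
structure CyclicOrientation (Q : QuivRel) (n : ℕ) where
  ev : ZMod n → ℕ
  ea : ZMod n → ℕ
  ev_mem : ∀ i, ev i ∈ Q.V
  ea_mem : ∀ i, ea i ∈ Q.A
  ev_inj : Function.Injective ev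
  ea_inj : Function.Injective ea
  ev_surj : ∀ v ∈ Q.V, ∃ i, ev i = v
  ea_surj : ∀ a ∈ Q.A, ∃ i, ea i = a
  compat : ∀ i : ZMod n,
    (Q.src (ea i) = ev i ∧ Q.tgt (ea i) = ev (i + 1)) ∨
    (Q.src (ea i) = ev (i + 1) ∧ Q.tgt (ea i) = ev i)

/-- Clockwise arrow with respect to a cyclic orientation. -/
def Clockwise (Q : QuivRel) {n : ℕ} (co : CyclicOrientation Q n) (a : ℕ) : Prop :=
  a ∈ Q.A ∧ ∃ i : ZMod n, co.ea i = a ∧ Q.src a = co.ev i ∧ Q.tgt a = co.ev (i + 1)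

/-- Anticlockwise arrow with respect to a cyclic orientation. -/
def Anticlockwise (Q : QuivRel) {n : ℕ} (co : CyclicOrientation Q n) (a : ℕ) : Prop :=
  a ∈ Q.A ∧ ∃ i : ZMod n, co.ea i = a ∧ Q.src a = co.ev (i + 1) ∧ Q.tgt a = co.ev i

end GentleQuiv

/-!
Glue a 2-cell to the underlying graph of `𝚫` along each triangle. The invariant of a quiver in `𝒜`
counts its arrows, its triangles and the free sides of its vertices, and this count forces the first
cohomology of the complex with coefficients in `ℤ/2` to vanish. The vanishing is preserved by
reflections, and it makes every arrow outside the triangles a cut. Arrows in triangles are never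
branch arrows, so it suffices to remove the relations `(α, β)` outside the triangles. Passing to the
opposite quiver if needed, choose one such that no other lies beyond the cut defined by `α`. Then
the reflection at the terminus of `α` either lowers the number of relations or turns `(α, β)` into a
relation whose first arrow has a smaller part of the quiver beyond its cut.
-/

namespace GentleQuiv

variable {Q : QuivRel}

/-! ### Connectivity -/

/-- A set of vertices containing both or none of the ends of every arrow. Connectivity says that a
nonempty such set exhausts the vertices. -/
def ArrowClosed (Q : QuivRel) (X : Set ℕ) : Prop :=
  ∀ a ∈ Q.A, Q.src a ∈ X ↔ Q.tgt a ∈ X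

theorem ArrowClosed.mem_of_reflTransGen {X : Set ℕ} (hX : ArrowClosed Q X) {x y : ℕ}
    (hxy : Relation.ReflTransGen (Adj Q) x y) (hx : x ∈ X) : y ∈ X := by
  induction hxy with
  | refl => exact hx
  | tail _ hadj ih =>
    obtain ⟨a, ha, ⟨rfl, rfl⟩ | ⟨rfl, rfl⟩⟩ := hadj
    · exact (hX a ha).1 ih
    · exact (hX a ha).2 ih

theorem connected_iff_forall_arrowClosed :
    Connected Q ↔ ∀ X : Set ℕ, ArrowClosed Q X → (X ∩ Q.V).Nonempty → ↑Q.V ⊆ X := by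
  constructor
  · rintro h X hX ⟨x, hx, hxV⟩ y hy
    exact hX.mem_of_reflTransGen (h x hxV y hy) hx
  · intro h x hx y hy
    refine h {v | Relation.ReflTransGen (Adj Q) x v} (fun a ha => ?_) ⟨x, .refl, hx⟩ hy
    exact ⟨fun hxa => hxa.tail ⟨a, ha, .inl ⟨rfl, rfl⟩⟩,
      fun hxa => hxa.tail ⟨a, ha, .inr ⟨rfl, rfl⟩⟩⟩

/-! ### Sides of vertices -/

/-- The sides `(x, ±1)` of the vertices. The functions `σ` and `τ` attach the start and the terminus
of every arrow to a side; a side carries at most one start and at most one terminus, and it carries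
both if and only if the two arrows form a relation. -/
def sides (Q : QuivRel) : Finset (ℕ × ℤ) :=
  Q.V ×ˢ {1, -1}

/-- The other side of the same vertex. -/
def oppSide (p : ℕ × ℤ) : ℕ × ℤ :=
  (p.1, -p.2)

theorem card_sides (Q : QuivRel) : (sides Q).card = 2 * Q.V.card := by
  simp [sides, mul_comm]

theorem oppSide_oppSide (p : ℕ × ℤ) : oppSide (oppSide p) = p := by
  simp [oppSide]

theorem mem_sides {p : ℕ × ℤ} : p ∈ sides Q ↔ p.1 ∈ Q.V ∧ (p.2 = 1 ∨ p.2 = -1) := by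
  simp [sides]

theorem eq_or_eq_oppSide {p q : ℕ × ℤ} (hp : p ∈ sides Q) (hq : q ∈ sides Q) (hpq : p.1 = q.1) :
    p = q ∨ p = oppSide q := by
  rw [mem_sides] at hp hq
  grind [oppSide]

/-- The relations are pairs of composable arrows. -/
def RelComposable (Q : QuivRel) : Prop :=
  ∀ a b, (a, b) ∈ Q.rel → a ∈ Q.A ∧ b ∈ Q.A ∧ Q.src a = Q.tgt b

/-- `b` may follow `a` in a path of `𝚫`: in the order of the paper, `(a, b)` is a path of length two
which is not a relation. -/
def Permitted (Q : QuivRel) (a b : ℕ) : Prop :=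
  a ∈ Q.A ∧ b ∈ Q.A ∧ Q.src a = Q.tgt b ∧ (a, b) ∉ Q.rel

namespace SigmaTau

variable {a b c : ℕ}

/-- The side at which an arrow starts. -/
def outSide (st : SigmaTau Q) (a : ℕ) : ℕ × ℤ :=
  (Q.src a, st.σ a)

/-- The side at which an arrow ends. -/
def inSide (st : SigmaTau Q) (a : ℕ) : ℕ × ℤ :=
  (Q.tgt a, st.τ a)

theorem outSide_injOn (st : SigmaTau Q) : Set.InjOn st.outSide Q.A := by
  intro a ha b hb hab
  obtain ⟨hsrc, hσ⟩ := Prod.ext_iff.1 hab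
  simp only [outSide] at hsrc hσ
  have := st.σ_pm a ha
  have := st.σ_src a ha b hb
  grind

theorem inSide_injOn (st : SigmaTau Q) : Set.InjOn st.inSide Q.A := by
  intro a ha b hb hab
  obtain ⟨htgt, hτ⟩ := Prod.ext_iff.1 hab
  simp only [inSide] at htgt hτ
  have := st.τ_pm a ha
  have := st.τ_tgt a ha b hb
  grind

theorem outSide_mem_sides (st : SigmaTau Q) (ha : a ∈ Q.A) (hV : Q.src a ∈ Q.V) :
    st.outSide a ∈ sides Q :=
  mem_sides.2 ⟨hV, st.σ_pm a ha⟩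

theorem inSide_mem_sides (st : SigmaTau Q) (ha : a ∈ Q.A) (hV : Q.tgt a ∈ Q.V) :
    st.inSide a ∈ sides Q :=
  mem_sides.2 ⟨hV, st.τ_pm a ha⟩

theorem mem_rel_iff (st : SigmaTau Q) (hc : RelComposable Q) :
    (a, b) ∈ Q.rel ↔ a ∈ Q.A ∧ b ∈ Q.A ∧ st.outSide a = st.inSide b := by
  simp only [outSide, inSide, Prod.mk.injEq]
  constructor
  · intro h
    obtain ⟨ha, hb, hab⟩ := hc a b h
    exact ⟨ha, hb, hab, (st.rel_iff a ha b hb hab).1 h⟩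
  · rintro ⟨ha, hb, hab, hs⟩
    exact (st.rel_iff a ha b hb hab).2 hs

theorem permitted_iff (st : SigmaTau Q) :
    Permitted Q a b ↔ a ∈ Q.A ∧ b ∈ Q.A ∧ st.outSide a = oppSide (st.inSide b) := by
  simp only [Permitted, outSide, inSide, oppSide, Prod.mk.injEq, and_congr_right_iff]
  intro ha hb hab
  rw [st.rel_iff a ha b hb hab]
  have := st.σ_pm a ha
  have := st.τ_pm b hb
  grind

theorem rel_right_unique (st : SigmaTau Q) (hc : RelComposable Q) (hb : (a, b) ∈ Q.rel)
    (hc' : (a, c) ∈ Q.rel) : b = c := by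
  rw [st.mem_rel_iff hc] at hb hc'
  exact st.inSide_injOn hb.2.1 hc'.2.1 (hb.2.2.symm.trans hc'.2.2)

theorem rel_left_unique (st : SigmaTau Q) (hc : RelComposable Q) (ha : (a, c) ∈ Q.rel)
    (hb : (b, c) ∈ Q.rel) : a = b := by
  rw [st.mem_rel_iff hc] at ha hb
  exact st.outSide_injOn ha.1 hb.1 (ha.2.2.trans hb.2.2.symm)

theorem permitted_right_unique (st : SigmaTau Q) (hb : Permitted Q a b) (hc : Permitted Q a c) :
    b = c := by
  rw [st.permitted_iff] at hb hc
  refine st.inSide_injOn hb.2.1 hc.2.1 ?_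
  rw [← oppSide_oppSide (st.inSide b), ← hb.2.2, hc.2.2, oppSide_oppSide]

theorem permitted_left_unique (st : SigmaTau Q) (ha : Permitted Q a c) (hb : Permitted Q b c) :
    a = b := by
  rw [st.permitted_iff] at ha hb
  exact st.outSide_injOn ha.1 hb.1 (ha.2.2.trans hb.2.2.symm)

theorem card_filter_src_le (st : SigmaTau Q) (x : ℕ) :
    (Q.A.filter fun a => Q.src a = x).card ≤ 2 := by
  refine (Finset.card_le_card_of_injOn (t := {1, -1}) st.σ ?_ ?_).trans Finset.card_le_two
  · intro a ha
    simpa using st.σ_pm a (Finset.mem_filter.1 ha).1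
  · intro a ha b hb hab
    simp only [Finset.coe_filter, Set.mem_ofPred_eq] at ha hb
    exact st.outSide_injOn ha.1 hb.1 (Prod.ext (ha.2.trans hb.2.symm) hab)

theorem card_filter_tgt_le (st : SigmaTau Q) (x : ℕ) :
    (Q.A.filter fun a => Q.tgt a = x).card ≤ 2 := by
  refine (Finset.card_le_card_of_injOn (t := {1, -1}) st.τ ?_ ?_).trans Finset.card_le_two
  · intro a ha
    simpa using st.τ_pm a (Finset.mem_filter.1 ha).1
  · intro a ha b hb hab
    simp only [Finset.coe_filter, Set.mem_ofPred_eq] at ha hb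
    exact st.inSide_injOn ha.1 hb.1 (Prod.ext (ha.2.trans hb.2.symm) hab)

end SigmaTau

/-! ### Triangles -/

namespace IsTriangleTriple

variable {a b c : ℕ}

theorem rotate (h : IsTriangleTriple Q a b c) : IsTriangleTriple Q b c a := by
  obtain ⟨⟨ha, hb, hc, hab, hbc, hac, h₀, h₁, h₂⟩, r₀, r₁, r₂⟩ := h
  exact ⟨⟨hb, hc, ha, hbc, hac.symm, hab.symm, h₁, h₂, h₀⟩, r₁, r₂, r₀⟩

theorem mem (h : IsTriangleTriple Q a b c) : a ∈ Q.A := h.1.1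

theorem ne (h : IsTriangleTriple Q a b c) : a ≠ b := h.1.2.2.2.1

theorem rel (h : IsTriangleTriple Q a b c) : (a, b) ∈ Q.rel := h.2.1

theorem src_eq_tgt (h : IsTriangleTriple Q a b c) : Q.src a = Q.tgt b := h.1.2.2.2.2.2.2.1

end IsTriangleTriple

theorem RelComposable.isTriangleTriple (hc : RelComposable Q) {a b c : ℕ} (hab : a ≠ b)
    (hbc : b ≠ c) (hac : a ≠ c) (rab : (a, b) ∈ Q.rel) (rbc : (b, c) ∈ Q.rel)
    (rca : (c, a) ∈ Q.rel) : IsTriangleTriple Q a b c := by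
  obtain ⟨ha, hb, h₀⟩ := hc _ _ rab
  obtain ⟨-, hcA, h₁⟩ := hc _ _ rbc
  exact ⟨⟨ha, hb, hcA, hab, hbc, hac, h₀, h₁, (hc _ _ rca).2.2⟩, rab, rbc, rca⟩

/-- The arrow `a` belongs to a triangle. -/
def InTriangle (Q : QuivRel) (a : ℕ) : Prop :=
  ∃ b c, IsTriangleTriple Q a b c

theorem inTriangle_iff_of_rel (st : SigmaTau Q) (hc : RelComposable Q) {a b : ℕ}
    (hab : (a, b) ∈ Q.rel) : InTriangle Q a ↔ InTriangle Q b := by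
  constructor
  · rintro ⟨b', c, hT⟩
    obtain rfl := st.rel_right_unique hc hT.rel hab
    exact ⟨c, a, hT.rotate⟩
  · rintro ⟨c, a', hT⟩
    obtain rfl := st.rel_left_unique hc hT.rotate.rotate.rel hab
    exact ⟨b, c, hT.rotate.rotate⟩

/-! ### Cocycles -/

/-- A cocycle modulo 2 on the arrows: its sum over every triangle vanishes. -/
def IsCocycle (Q : QuivRel) (g : ℕ → ZMod 2) : Prop :=
  ∀ a b c, IsTriangleTriple Q a b c → g a + g b + g c = 0

/-- The coboundary of `f` is `g`. -/
def IsPotential (Q : QuivRel) (f g : ℕ → ZMod 2) : Prop :=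
  ∀ a ∈ Q.A, f (Q.src a) + f (Q.tgt a) = g a

theorem isCocycle_single {a : ℕ} (ha : ¬ InTriangle Q a) : IsCocycle Q (Pi.single a 1) := by
  intro x y z hT
  have hx : x ≠ a := by rintro rfl; exact ha ⟨_, _, hT⟩
  have hy : y ≠ a := by rintro rfl; exact ha ⟨_, _, hT.rotate⟩
  have hz : z ≠ a := by rintro rfl; exact ha ⟨_, _, hT.rotate.rotate⟩
  simp [hx, hy, hz]

theorem isCocycle_single_add_single (st : SigmaTau Q) (hc : RelComposable Q) {a b c : ℕ}
    (hT : IsTriangleTriple Q a b c) : IsCocycle Q (Pi.single a 1 + Pi.single b 1) := by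
  have key {u v w x y z : ℕ} (hT : IsTriangleTriple Q u v w) (hT' : IsTriangleTriple Q x y z) :
      x = u ↔ y = v := by
    constructor <;> rintro rfl
    · exact st.rel_right_unique hc hT'.rel hT.rel
    · exact st.rel_left_unique hc hT'.rel hT.rel
  intro x y z hT'
  have h₁ := key hT hT'
  have h₂ := key hT hT'.rotate
  have h₃ := key hT hT'.rotate.rotate
  have hxy : ¬(x = a ∧ y = a) := fun h => hT'.ne (h.1.trans h.2.symm)
  have hyz : ¬(y = a ∧ z = a) := fun h => hT'.rotate.ne (h.1.trans h.2.symm)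
  have hzx : ¬(z = a ∧ x = a) := fun h => hT'.rotate.rotate.ne (h.1.trans h.2.symm)
  simp only [Pi.add_apply, Pi.single_apply, ← h₁, ← h₂, ← h₃]
  by_cases hx : x = a <;> by_cases hy : y = a <;> by_cases hz : z = a <;>
    simp_all [CharTwo.add_self_eq_zero]

/-! ### Triangle-acyclic quivers -/

/-- The class in which the reductions take place. Gluing a 2-cell to every triangle of `𝚫` gives a
connected complex without first cohomology modulo 2, and at least one side of a vertex carries no
start of an arrow. The class contains `𝒜` and is stable under reflections. -/
structure IsTriangleAcyclic (Q : QuivRel) : Prop where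
  ends_mem : ∀ a ∈ Q.A, Q.src a ∈ Q.V ∧ Q.tgt a ∈ Q.V
  connected : Connected Q
  composable : RelComposable Q
  card_lt : Q.A.card < 2 * Q.V.card
  exists_potential : ∀ g, IsCocycle Q g → ∃ f, IsPotential Q f g

/-- A nonempty set of arrows, each of which can be followed by another one along a path of `𝚫`, so
that the set is a union of oriented cycles without relations. -/
structure IsPermittedCycle (Q : QuivRel) (S : Finset ℕ) : Prop where
  nonempty : S.Nonempty
  exists_permitted : ∀ a ∈ S, ∃ b ∈ S, Permitted Q a b

namespace IsPermittedCycle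

variable {S : Finset ℕ}

theorem subset (hS : IsPermittedCycle Q S) : S ⊆ Q.A := by
  intro a ha
  obtain ⟨b, -, hab⟩ := hS.exists_permitted a ha
  exact hab.1

theorem sum_cocycle (hS : IsPermittedCycle Q S) (st : SigmaTau Q) (hQ : IsTriangleAcyclic Q)
    {g : ℕ → ZMod 2} (hg : IsCocycle Q g) : ∑ a ∈ S, g a = 0 := by
  obtain ⟨f, hf⟩ := hQ.exists_potential g hg
  choose! next next_mem hnext using hS.exists_permitted
  have hinj : Set.InjOn next S := fun a ha b hb hab =>
    st.permitted_left_unique (hnext a ha) (hab ▸ hnext b hb)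
  have hsrc : ∑ a ∈ S, f (Q.src a) = ∑ a ∈ S, f (Q.tgt a) :=
    Finset.sum_nbij next next_mem hinj (Finset.surjOn_of_injOn_of_card_le next next_mem hinj le_rfl)
      fun a ha => by rw [(hnext a ha).2.2.1]
  rw [← Finset.sum_congr rfl fun a ha => hf a (hS.subset ha), Finset.sum_add_distrib, hsrc,
    CharTwo.add_self_eq_zero]

theorem inTriangle (hS : IsPermittedCycle Q S) (st : SigmaTau Q) (hQ : IsTriangleAcyclic Q) {a : ℕ}
    (ha : a ∈ S) : InTriangle Q a := by
  by_contra hn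
  have := hS.sum_cocycle st hQ (isCocycle_single hn)
  simp [ha] at this

theorem mem_of_triangle (hS : IsPermittedCycle Q S) (st : SigmaTau Q) (hQ : IsTriangleAcyclic Q)
    {a b c : ℕ} (hT : IsTriangleTriple Q a b c) (ha : a ∈ S) : b ∈ S := by
  by_contra hb
  have := hS.sum_cocycle st hQ (isCocycle_single_add_single st hQ.composable hT)
  simp [Finset.sum_add_distrib, ha, hb] at this

theorem exists_outSide_inSide_eq (hS : IsPermittedCycle Q S) (st : SigmaTau Q)
    (hQ : IsTriangleAcyclic Q) {a : ℕ} (ha : a ∈ S) {p : ℕ × ℤ} (hp : p ∈ sides Q)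
    (hpa : p.1 = Q.src a) : (∃ b ∈ S, st.outSide b = p) ∧ ∃ b ∈ S, st.inSide b = p := by
  obtain ⟨b, hb, hab⟩ := hS.exists_permitted a ha
  obtain ⟨a₁, a₂, hTa⟩ := hS.inTriangle st hQ ha
  obtain ⟨b₁, b₂, hTb⟩ := hS.inTriangle st hQ hb
  have ha₁ := hS.mem_of_triangle st hQ hTa ha
  have hb₂ := hS.mem_of_triangle st hQ hTb.rotate (hS.mem_of_triangle st hQ hTb hb)
  have hrel_a := ((st.mem_rel_iff hQ.composable).1 hTa.rel).2.2
  have hrel_b := ((st.mem_rel_iff hQ.composable).1 hTb.rotate.rotate.rel).2.2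
  have hab' := (st.permitted_iff.1 hab).2.2
  have hsrc := st.outSide_mem_sides hab.1 (hQ.ends_mem a hab.1).1
  obtain rfl | rfl := eq_or_eq_oppSide hp hsrc hpa
  · exact ⟨⟨a, ha, rfl⟩, a₁, ha₁, hrel_a.symm⟩
  · rw [hab', oppSide_oppSide]
    exact ⟨⟨b₂, hb₂, hrel_b⟩, b, hb, rfl⟩

end IsPermittedCycle

theorem IsTriangleAcyclic.not_isPermittedCycle (hQ : IsTriangleAcyclic Q) (st : SigmaTau Q)
    (S : Finset ℕ) : ¬ IsPermittedCycle Q S := by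
  intro hS
  have hclosed : ArrowClosed Q (Q.src '' S) := by
    intro e he
    constructor <;> rintro ⟨a, ha, hae⟩
    · obtain ⟨⟨b, hb, hbe⟩, -⟩ := hS.exists_outSide_inSide_eq st hQ ha
        (st.outSide_mem_sides he (hQ.ends_mem e he).1) hae.symm
      obtain rfl := st.outSide_injOn (hS.subset hb) he hbe
      obtain ⟨c, d, hT⟩ := hS.inTriangle st hQ hb
      exact ⟨d, hS.mem_of_triangle st hQ hT.rotate (hS.mem_of_triangle st hQ hT hb),
        hT.rotate.rotate.src_eq_tgt⟩
    · obtain ⟨-, b, hb, hbe⟩ := hS.exists_outSide_inSide_eq st hQ ha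
        (st.inSide_mem_sides he (hQ.ends_mem e he).2) hae.symm
      obtain rfl := st.inSide_injOn (hS.subset hb) he hbe
      exact ⟨b, hb, rfl⟩
  obtain ⟨a₀, ha₀⟩ := hS.nonempty
  have hV : ↑Q.V ⊆ Q.src '' S := connected_iff_forall_arrowClosed.1 hQ.connected _ hclosed
    ⟨_, ⟨a₀, ha₀, rfl⟩, (hQ.ends_mem a₀ (hS.subset ha₀)).1⟩
  have hsides : sides Q ⊆ S.image st.outSide := by
    intro p hp
    obtain ⟨a, ha, hap⟩ := hV (mem_sides.1 hp).1
    exact Finset.mem_image.2 (hS.exists_outSide_inSide_eq st hQ ha hp hap.symm).1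
  have hle : 2 * Q.V.card ≤ S.card :=
    card_sides Q ▸ (Finset.card_le_card hsides).trans Finset.card_image_le
  exact (hle.trans (Finset.card_le_card hS.subset)).not_gt hQ.card_lt

theorem IsTriangleAcyclic.not_transGen_permitted (hQ : IsTriangleAcyclic Q) (st : SigmaTau Q)
    (a : ℕ) : ¬ Relation.TransGen (Permitted Q) a a := by
  classical
  intro ha
  refine hQ.not_isPermittedCycle st
    (Q.A.filter fun b => Relation.TransGen (Permitted Q) a b ∧ Relation.TransGen (Permitted Q) b a)
    ⟨⟨a, ?_⟩, ?_⟩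
  · obtain ⟨b, hab, -⟩ := Relation.TransGen.head'_iff.1 ha
    exact Finset.mem_filter.2 ⟨hab.1, ha, ha⟩
  · intro b hb
    obtain ⟨-, hab, hba⟩ := Finset.mem_filter.1 hb
    obtain ⟨c, hbc, hca⟩ := Relation.TransGen.head'_iff.1 hba
    exact ⟨c, Finset.mem_filter.2
      ⟨hbc.2.1, hab.tail hbc, Relation.TransGen.trans_right hca ha⟩, hbc⟩

/-! ### Triangle-acyclic quivers are gentle -/

theorem nodup_of_isChain {α : Type*} {R : α → α → Prop} (hR : ∀ a, ¬ Relation.TransGen R a a)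
    {l : List α} (hl : l.IsChain R) : l.Nodup := by
  have hpair : l.Pairwise (Relation.TransGen R) :=
    (hl.imp fun _ _ => Relation.TransGen.single).pairwise
  exact hpair.imp fun {a b} hab => by rintro rfl; exact hR a hab

theorem isChain_permitted {l : List ℕ} (hl : IsPathList Q l) (hrel : ¬ HasRelSubpath Q l) :
    l.IsChain (Permitted Q) := by
  obtain ⟨-, hA, hcomp⟩ := hl
  refine List.isChain_iff_forall_rel_of_append_cons_cons.2 fun a b l₁ l₂ h => ?_
  refine ⟨hA a (by simp [h]), hA b (by simp [h]),
    List.isChain_iff_forall_rel_of_append_cons_cons.1 hcomp h,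
    fun hab => hrel ⟨a, b, hab, l₁, l₂, by simp [h]⟩⟩

namespace IsTriangleAcyclic

theorem nonempty (hQ : IsTriangleAcyclic Q) : Q.V.Nonempty := by
  have := hQ.card_lt
  exact Finset.card_pos.1 (by omega)

theorem hasRelSubpath_of_card_lt_length (hQ : IsTriangleAcyclic Q) (st : SigmaTau Q) {l : List ℕ}
    (hl : IsPathList Q l) (hlen : Q.A.card < l.length) : HasRelSubpath Q l := by
  by_contra hrel
  have hnodup := nodup_of_isChain (hQ.not_transGen_permitted st) (isChain_permitted hl hrel)
  rw [← List.toFinset_card_of_nodup hnodup] at hlen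
  exact hlen.not_ge (Finset.card_le_card fun a ha => hl.2.1 a (List.mem_toFinset.1 ha))

theorem isGentle (hQ : IsTriangleAcyclic Q) (st : SigmaTau Q) : IsGentle Q := by
  refine ⟨hQ.nonempty, hQ.ends_mem, hQ.connected, fun ρ => hQ.composable ρ.1 ρ.2,
    st.card_filter_src_le, st.card_filter_tgt_le, fun a ha => ?_, fun a ha => ?_, fun a _ => ?_,
    fun a _ => ?_, Q.A.card + 1, fun l hl hlen => ?_⟩
  · refine Finset.card_le_one.2 fun b hb c hc => ?_
    obtain ⟨hbA, hba⟩ := Finset.mem_filter.1 hb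
    obtain ⟨hcA, hca⟩ := Finset.mem_filter.1 hc
    exact st.permitted_left_unique ⟨hbA, ha, hba⟩ ⟨hcA, ha, hca⟩
  · refine Finset.card_le_one.2 fun b hb c hc => ?_
    obtain ⟨hbA, hba, hab⟩ := Finset.mem_filter.1 hb
    obtain ⟨hcA, hca, hac⟩ := Finset.mem_filter.1 hc
    exact st.permitted_right_unique ⟨ha, hbA, hba.symm, hab⟩ ⟨ha, hcA, hca.symm, hac⟩
  · exact Finset.card_le_one.2 fun b hb c hc => st.rel_left_unique hQ.composable
      (Finset.mem_filter.1 hb).2 (Finset.mem_filter.1 hc).2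
  · exact Finset.card_le_one.2 fun b hb c hc => st.rel_right_unique hQ.composable
      (Finset.mem_filter.1 hb).2 (Finset.mem_filter.1 hc).2
  · exact hQ.hasRelSubpath_of_card_lt_length st hl (by omega)

end IsTriangleAcyclic

/-! ### Cuts -/

/-- The arrow `a` is the only arrow of `Q` crossing the boundary of the set of vertices `D`, and it
enters `D`. Thus `a` is a branch arrow and `D` is a side of the cut which it defines. -/
structure IsCut (Q : QuivRel) (a : ℕ) (D : Finset ℕ) : Prop where
  subset : D ⊆ Q.V
  src_notMem : Q.src a ∉ D
  tgt_mem : Q.tgt a ∈ D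
  src_mem_iff : ∀ b ∈ Q.A, b ≠ a → (Q.src b ∈ D ↔ Q.tgt b ∈ D)

theorem IsTriangleAcyclic.exists_isCut (hQ : IsTriangleAcyclic Q) {a : ℕ} (ha : a ∈ Q.A)
    (hn : ¬ InTriangle Q a) : ∃ D, IsCut Q a D := by
  obtain ⟨f, hf⟩ := hQ.exists_potential _ (isCocycle_single hn)
  refine ⟨Q.V.filter fun v => f v ≠ f (Q.src a), Finset.filter_subset _ _, by simp, ?_, ?_⟩
  · have hfa := hf a ha
    refine Finset.mem_filter.2 ⟨(hQ.ends_mem a ha).2, fun h => ?_⟩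
    simp [h, CharTwo.add_self_eq_zero] at hfa
  · intro b hb hba
    have hfb := hf b hb
    rw [Pi.single_eq_of_ne hba, CharTwo.add_eq_zero] at hfb
    simp [hQ.ends_mem b hb, hfb]

theorem IsCut.not_inTriangle {a : ℕ} {D : Finset ℕ} (hD : IsCut Q a D) : ¬ InTriangle Q a := by
  rintro ⟨b, c, hT⟩
  refine hD.src_notMem ?_
  rw [hT.src_eq_tgt, ← hD.src_mem_iff b hT.rotate.mem hT.ne.symm, hT.rotate.src_eq_tgt,
    ← hD.src_mem_iff c hT.rotate.rotate.mem hT.rotate.rotate.ne, hT.rotate.rotate.src_eq_tgt]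
  exact hD.tgt_mem

theorem not_branchArrow_of_inTriangle (hQ : Connected Q) {a : ℕ} (ha : InTriangle Q a) :
    ¬ BranchArrow Q a := by
  rintro ⟨-, hn⟩
  obtain ⟨b, c, hT⟩ := ha
  refine hn (connected_iff_forall_arrowClosed.2 fun X hX hXV => ?_)
  have hdel : ∀ e ∈ Q.A, e ≠ a → (Q.src e ∈ X ↔ Q.tgt e ∈ X) := fun e he hea =>
    hX e (by simp [deleteArrows, he, hea])
  refine connected_iff_forall_arrowClosed.1 hQ X (fun e he => ?_) hXV
  obtain rfl | hea := eq_or_ne e a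
  · rw [hT.src_eq_tgt, ← hdel b hT.rotate.mem hT.ne.symm, hT.rotate.src_eq_tgt,
      ← hdel c hT.rotate.rotate.mem hT.rotate.rotate.ne, hT.rotate.rotate.src_eq_tgt]
  · exact hdel e he hea

theorem IsTriangleAcyclic.not_rel_self (hQ : IsTriangleAcyclic Q) (st : SigmaTau Q) (a : ℕ) :
    (a, a) ∉ Q.rel := by
  intro haa
  obtain ⟨ha, -, hloop⟩ := hQ.composable a a haa
  have hn : ¬ InTriangle Q a := fun ⟨b, c, hT⟩ =>
    hT.ne (st.rel_right_unique hQ.composable haa hT.rel)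
  obtain ⟨D, hD⟩ := hQ.exists_isCut ha hn
  exact hD.src_notMem (hloop ▸ hD.tgt_mem)

theorem IsTriangleAcyclic.noLoops (hQ : IsTriangleAcyclic Q) (st : SigmaTau Q) : NoLoops Q :=
  fun a ha hloop => hQ.not_transGen_permitted st a
    (.single ⟨ha, ha, hloop, hQ.not_rel_self st a⟩)

/-! ### Duality -/

theorem opQR_opQR (Q : QuivRel) : opQR (opQR Q) = Q := by
  have hswap : (fun ρ : ℕ × ℕ => (ρ.2, ρ.1)) ∘ (fun ρ : ℕ × ℕ => (ρ.2, ρ.1)) = id := rfl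
  simp only [opQR, Finset.image_image, hswap, Finset.image_id]

theorem mem_opQR_rel {a b : ℕ} : (a, b) ∈ (opQR Q).rel ↔ (b, a) ∈ Q.rel := by
  simp [opQR]

theorem card_opQR_rel (Q : QuivRel) : (opQR Q).rel.card = Q.rel.card :=
  Finset.card_image_of_injective _ Prod.swap_injective

theorem IsTriangleTriple.op {a b c : ℕ} (hT : IsTriangleTriple Q a b c) :
    IsTriangleTriple (opQR Q) c b a :=
  ⟨⟨hT.rotate.rotate.mem, hT.rotate.mem, hT.mem, hT.rotate.ne.symm, hT.ne.symm,
    hT.rotate.rotate.ne, hT.rotate.src_eq_tgt.symm, hT.src_eq_tgt.symm,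
    hT.rotate.rotate.src_eq_tgt.symm⟩, mem_opQR_rel.2 hT.rotate.rel, mem_opQR_rel.2 hT.rel,
    mem_opQR_rel.2 hT.rotate.rotate.rel⟩

/-- The functions `σ` and `τ` exchange their roles in the opposite quiver. -/
def SigmaTau.op (st : SigmaTau Q) : SigmaTau (opQR Q) where
  σ := st.τ
  τ := st.σ
  σ_pm := st.τ_pm
  τ_pm := st.σ_pm
  σ_src := st.τ_tgt
  τ_tgt := st.σ_src
  rel_iff a ha b hb hab := by
    rw [mem_opQR_rel, st.rel_iff b hb a ha hab.symm, eq_comm]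

theorem IsTriangleAcyclic.op (hQ : IsTriangleAcyclic Q) : IsTriangleAcyclic (opQR Q) where
  ends_mem a ha := (hQ.ends_mem a ha).symm
  connected := connected_iff_forall_arrowClosed.2 fun X hX =>
    connected_iff_forall_arrowClosed.1 hQ.connected X fun a ha => (hX a ha).symm
  composable a b hab := by
    obtain ⟨hb, ha, hba⟩ := hQ.composable b a (mem_opQR_rel.1 hab)
    exact ⟨ha, hb, hba.symm⟩
  card_lt := hQ.card_lt
  exists_potential g hg := by
    obtain ⟨f, hf⟩ := hQ.exists_potential g fun a b c hT => by
      rw [← hg c b a hT.op]; ring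
    exact ⟨f, fun a ha => (add_comm _ _).trans (hf a ha)⟩

theorem RefStep.op {Q' : QuivRel} (h : RefStep Q Q') : RefStep (opQR Q) (opQR Q') := by
  obtain ⟨x, h⟩ | h | ⟨fV, fA, hV, hA, hends, hrel⟩ := h
  · exact .inr (.inl ⟨x, by rwa [IsCoreflection, opQR_opQR, opQR_opQR]⟩)
  · exact .inl h
  · refine .inr (.inr ⟨fV, fA, hV, hA, fun a ha => (hends a ha).symm, fun a ha b hb => ?_⟩)
    rw [mem_opQR_rel, mem_opQR_rel]
    exact hrel b hb a ha

theorem RefEquiv.op {Q' : QuivRel} (h : RefEquiv Q Q') : RefEquiv (opQR Q) (opQR Q') :=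
  Relation.ReflTransGen.lift opQR (fun _ _ => RefStep.op) _ _ h

theorem IsCut.op {a : ℕ} {D : Finset ℕ} (hD : IsCut Q a D) (hQ : IsTriangleAcyclic Q)
    (ha : a ∈ Q.A) : IsCut (opQR Q) a (Q.V \ D) where
  subset := Finset.sdiff_subset
  src_notMem h := (Finset.mem_sdiff.1 h).2 hD.tgt_mem
  tgt_mem := Finset.mem_sdiff.2 ⟨(hQ.ends_mem a ha).1, hD.src_notMem⟩
  src_mem_iff b hb hba := by
    simp only [opQR, Finset.mem_sdiff, hQ.ends_mem b hb, true_and, hD.src_mem_iff b hb hba]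

/-! ### Exchanging two families of points -/

/-- The families `u` and `v` are injective on `E` and have disjoint images. -/
structure Exchangeable {ι α : Type*} (E : Finset ι) (u v : ι → α) : Prop where
  injOn_left : Set.InjOn u E
  injOn_right : Set.InjOn v E
  ne : ∀ i ∈ E, ∀ j ∈ E, u i ≠ v j

open Classical in
/-- The map exchanging `u i` with `v i` for all `i ∈ E` and fixing all other points. -/
noncomputable def exchange {ι α : Type*} [Nonempty ι] (E : Finset ι) (u v : ι → α) (p : α) : α :=
  if p ∈ u '' E then v (Function.invFunOn u E p)
  else if p ∈ v '' E then u (Function.invFunOn v E p) else p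

namespace Exchangeable

variable {ι α : Type*} [Nonempty ι] {E : Finset ι} {u v : ι → α}

theorem exchange_left (h : Exchangeable E u v) {i : ι} (hi : i ∈ E) :
    exchange E u v (u i) = v i := by
  rw [exchange, if_pos ⟨i, hi, rfl⟩, h.injOn_left.leftInvOn_invFunOn hi]

theorem exchange_right (h : Exchangeable E u v) {i : ι} (hi : i ∈ E) :
    exchange E u v (v i) = u i := by
  have hu : v i ∉ u '' E := fun ⟨j, hj, hji⟩ => h.ne j hj i hi hji
  rw [exchange, if_neg hu, if_pos ⟨i, hi, rfl⟩, h.injOn_right.leftInvOn_invFunOn hi]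

end Exchangeable

section

variable {ι α : Type*} [Nonempty ι] {E : Finset ι} {u v : ι → α}

theorem exchange_of_forall_ne {p : α} (hu : ∀ i ∈ E, u i ≠ p) (hv : ∀ i ∈ E, v i ≠ p) :
    exchange E u v p = p := by
  rw [exchange, if_neg fun ⟨i, hi, h⟩ => hu i hi h, if_neg fun ⟨i, hi, h⟩ => hv i hi h]

theorem Exchangeable.exchange_cases (h : Exchangeable E u v) (p : α) :
    (∃ i ∈ E, p = u i ∧ exchange E u v p = v i) ∨ (∃ i ∈ E, p = v i ∧ exchange E u v p = u i) ∨
      exchange E u v p = p := by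
  by_cases hu : ∃ i ∈ E, u i = p
  · obtain ⟨i, hi, rfl⟩ := hu
    exact .inl ⟨i, hi, rfl, h.exchange_left hi⟩
  by_cases hv : ∃ i ∈ E, v i = p
  · obtain ⟨i, hi, rfl⟩ := hv
    exact .inr (.inl ⟨i, hi, rfl, h.exchange_right hi⟩)
  · push Not at hu hv
    exact .inr (.inr (exchange_of_forall_ne hu hv))

theorem Exchangeable.involutive (h : Exchangeable E u v) :
    Function.Involutive (exchange E u v) := by
  intro p
  obtain ⟨i, hi, rfl, hp⟩ | ⟨i, hi, rfl, hp⟩ | hp := h.exchange_cases p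
  · rw [hp, h.exchange_right hi]
  · rw [hp, h.exchange_left hi]
  · rw [hp, hp]

end

/-! ### Reflections -/

/-- The arrows ending at `z`. -/
def inArrows (Q : QuivRel) (z : ℕ) : Finset ℕ :=
  Q.A.filter fun a => Q.tgt a = z

theorem mem_inArrows {z a : ℕ} : a ∈ inArrows Q z ↔ a ∈ Q.A ∧ Q.tgt a = z :=
  Finset.mem_filter

namespace SigmaTau

/-- The effect on the sides at which arrows start of the reflection at `z`. -/
noncomputable def reflOutSide (st : SigmaTau Q) (z : ℕ) : ℕ × ℤ → ℕ × ℤ :=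
  exchange (inArrows Q z) st.outSide fun e => oppSide (st.inSide e)

/-- The effect on the sides at which arrows end of the reflection at `z`. -/
noncomputable def reflInSide (st : SigmaTau Q) (z : ℕ) : ℕ × ℤ → ℕ × ℤ :=
  exchange (inArrows Q z) st.outSide st.inSide

theorem exchangeable_outSide_inSide (st : SigmaTau Q) (hQ : NoLoops Q) (z : ℕ) :
    Exchangeable (inArrows Q z) st.outSide st.inSide where
  injOn_left := st.outSide_injOn.mono fun _ he => (mem_inArrows.1 he).1
  injOn_right := st.inSide_injOn.mono fun _ he => (mem_inArrows.1 he).1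
  ne e he e' he' h := by
    rw [mem_inArrows] at he he'
    exact hQ e he.1 ((congrArg Prod.fst h).trans (he'.2.trans he.2.symm))

theorem exchangeable_outSide_oppSide_inSide (st : SigmaTau Q) (hQ : NoLoops Q) (z : ℕ) :
    Exchangeable (inArrows Q z) st.outSide fun e => oppSide (st.inSide e) where
  injOn_left := (st.exchangeable_outSide_inSide hQ z).injOn_left
  injOn_right e he e' he' h := (st.exchangeable_outSide_inSide hQ z).injOn_right he he' <| by
    simpa only [oppSide_oppSide] using congrArg oppSide h
  ne e he e' he' h := by
    rw [mem_inArrows] at he he'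
    exact hQ e he.1 ((congrArg Prod.fst h).trans (he'.2.trans he.2.symm))

end SigmaTau

open Classical in
/-- The reflection of `Q` at `z`. In terms of sides, an arrow `e` ending at `z` exchanges the side
at which it starts with the side at which it ends; the starts of the other arrows at `z` move along
the arrow which permits the composition, and their ends along the arrow of the relation. -/
noncomputable def reflect (st : SigmaTau Q) (z : ℕ) : QuivRel where
  V := Q.V
  A := Q.A
  src a := (st.reflOutSide z (st.outSide a)).1
  tgt a := (st.reflInSide z (st.inSide a)).1
  rel := (Q.A ×ˢ Q.A).filter fun ρ =>
    st.reflOutSide z (st.outSide ρ.1) = st.reflInSide z (st.inSide ρ.2)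

theorem mem_reflect_rel {st : SigmaTau Q} {z a b : ℕ} :
    (a, b) ∈ (reflect st z).rel ↔ a ∈ Q.A ∧ b ∈ Q.A ∧
      st.reflOutSide z (st.outSide a) = st.reflInSide z (st.inSide b) := by
  simp [reflect, and_assoc]

namespace IsTriangleAcyclic

variable {z : ℕ}

theorem reflOutSide_mem_sides (hQ : IsTriangleAcyclic Q) (st : SigmaTau Q) {p : ℕ × ℤ}
    (hp : p ∈ sides Q) : st.reflOutSide z p ∈ sides Q := by
  obtain ⟨e, he, -, h⟩ | ⟨e, he, -, h⟩ | h :=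
    (st.exchangeable_outSide_oppSide_inSide (hQ.noLoops st) z).exchange_cases p
  all_goals rw [SigmaTau.reflOutSide, h]
  · have := st.inSide_mem_sides (mem_inArrows.1 he).1 (hQ.ends_mem e (mem_inArrows.1 he).1).2
    rw [mem_sides] at *
    grind [oppSide]
  · exact st.outSide_mem_sides (mem_inArrows.1 he).1 (hQ.ends_mem e (mem_inArrows.1 he).1).1
  · exact hp

theorem reflInSide_mem_sides (hQ : IsTriangleAcyclic Q) (st : SigmaTau Q) {p : ℕ × ℤ}
    (hp : p ∈ sides Q) : st.reflInSide z p ∈ sides Q := by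
  obtain ⟨e, he, -, h⟩ | ⟨e, he, -, h⟩ | h :=
    (st.exchangeable_outSide_inSide (hQ.noLoops st) z).exchange_cases p
  all_goals rw [SigmaTau.reflInSide, h]
  · exact st.inSide_mem_sides (mem_inArrows.1 he).1 (hQ.ends_mem e (mem_inArrows.1 he).1).2
  · exact st.outSide_mem_sides (mem_inArrows.1 he).1 (hQ.ends_mem e (mem_inArrows.1 he).1).1
  · exact hp

theorem reflOutSide_outSide_of_tgt_eq (hQ : IsTriangleAcyclic Q) (st : SigmaTau Q) {a : ℕ}
    (ha : a ∈ Q.A) (haz : Q.tgt a = z) : st.reflOutSide z (st.outSide a) = oppSide (st.inSide a) :=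
  (st.exchangeable_outSide_oppSide_inSide (hQ.noLoops st) z).exchange_left
    (mem_inArrows.2 ⟨ha, haz⟩)

theorem reflInSide_inSide_of_tgt_eq (hQ : IsTriangleAcyclic Q) (st : SigmaTau Q) {a : ℕ}
    (ha : a ∈ Q.A) (haz : Q.tgt a = z) : st.reflInSide z (st.inSide a) = st.outSide a :=
  (st.exchangeable_outSide_inSide (hQ.noLoops st) z).exchange_right (mem_inArrows.2 ⟨ha, haz⟩)

theorem reflOutSide_outSide_of_permitted (hQ : IsTriangleAcyclic Q) (st : SigmaTau Q) {a b : ℕ}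
    (hab : Permitted Q a b) (hbz : Q.tgt b = z) :
    st.reflOutSide z (st.outSide a) = st.outSide b := by
  rw [(st.permitted_iff.1 hab).2.2]
  exact (st.exchangeable_outSide_oppSide_inSide (hQ.noLoops st) z).exchange_right
    (mem_inArrows.2 ⟨hab.2.1, hbz⟩)

theorem reflInSide_inSide_of_rel (hQ : IsTriangleAcyclic Q) (st : SigmaTau Q) {e a : ℕ}
    (hea : (e, a) ∈ Q.rel) (hez : Q.tgt e = z) : st.reflInSide z (st.inSide a) = st.inSide e := by
  obtain ⟨he, -, hside⟩ := (st.mem_rel_iff hQ.composable).1 hea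
  rw [← hside]
  exact (st.exchangeable_outSide_inSide (hQ.noLoops st) z).exchange_left (mem_inArrows.2 ⟨he, hez⟩)

end IsTriangleAcyclic

namespace SigmaTau

variable {z : ℕ}

theorem reflOutSide_of_ne (st : SigmaTau Q) {p : ℕ × ℤ} (hpz : p.1 ≠ z)
    (hp : ∀ e ∈ inArrows Q z, st.outSide e ≠ p) : st.reflOutSide z p = p :=
  exchange_of_forall_ne hp fun _ he h => hpz (h ▸ (mem_inArrows.1 he).2)

theorem reflInSide_of_ne (st : SigmaTau Q) {p : ℕ × ℤ} (hpz : p.1 ≠ z)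
    (hp : ∀ e ∈ inArrows Q z, st.outSide e ≠ p) : st.reflInSide z p = p :=
  exchange_of_forall_ne hp fun _ he h => hpz (h ▸ (mem_inArrows.1 he).2)

theorem outSide_ne_of_tgt_ne (st : SigmaTau Q) {a : ℕ} (ha : a ∈ Q.A) (haz : Q.tgt a ≠ z) :
    ∀ e ∈ inArrows Q z, st.outSide e ≠ st.outSide a := by
  intro e he h
  rw [mem_inArrows] at he
  exact haz (st.outSide_injOn he.1 ha h ▸ he.2)

theorem reflOutSide_outSide_of_ne (st : SigmaTau Q) {a : ℕ} (ha : a ∈ Q.A) (haz : Q.tgt a ≠ z)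
    (haz' : Q.src a ≠ z) : st.reflOutSide z (st.outSide a) = st.outSide a :=
  st.reflOutSide_of_ne haz' (st.outSide_ne_of_tgt_ne ha haz)

theorem reflInSide_inSide_of_forall_notMem (st : SigmaTau Q) (hc : RelComposable Q) {a : ℕ}
    (ha : a ∈ Q.A) (haz : Q.tgt a ≠ z) (hrel : ∀ e ∈ inArrows Q z, (e, a) ∉ Q.rel) :
    st.reflInSide z (st.inSide a) = st.inSide a :=
  st.reflInSide_of_ne haz fun e he h =>
    hrel e he ((st.mem_rel_iff hc).2 ⟨(mem_inArrows.1 he).1, ha, h⟩)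

end SigmaTau

theorem CanReflect.exists_permitted {z a : ℕ} (hz : CanReflect Q z) (ha : a ∈ Q.A)
    (haz : Q.src a = z) : ∃ b, Permitted Q a b ∧ Q.tgt b = z := by
  obtain ⟨b, hb, hbz, hab⟩ := hz.2 a ha haz
  exact ⟨b, ⟨ha, hb, haz.trans hbz.symm, hab⟩, hbz⟩

namespace IsTriangleAcyclic

variable {z : ℕ}

theorem mem_reflect_rel_iff_of_tgt_eq (hQ : IsTriangleAcyclic Q) (st : SigmaTau Q) {a b : ℕ}
    (ha : a ∈ Q.A) (haz : Q.tgt a = z) :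
    (a, b) ∈ (reflect st z).rel ↔ ∃ c ∈ Q.A, c ≠ a ∧ Q.tgt c = z ∧ (c, b) ∈ Q.rel := by
  have hex := st.exchangeable_outSide_inSide (hQ.noLoops st) z
  rw [mem_reflect_rel, hQ.reflOutSide_outSide_of_tgt_eq st ha haz]
  constructor
  · rintro ⟨-, hb, hab⟩
    obtain ⟨e, he, heb, h⟩ | ⟨e, he, heb, h⟩ | h := hex.exchange_cases (st.inSide b)
    all_goals rw [SigmaTau.reflInSide, h] at hab
    all_goals try rw [mem_inArrows] at he
    · refine ⟨e, he.1, ?_, he.2, (st.mem_rel_iff hQ.composable).2 ⟨he.1, hb, heb.symm⟩⟩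
      rintro rfl
      have := st.τ_pm e ha
      simp only [oppSide, SigmaTau.inSide, Prod.mk.injEq] at hab
      omega
    · exact absurd ((congrArg Prod.fst hab).symm.trans (haz.trans he.2.symm))
        (hQ.noLoops st e he.1)
    · have hbz : Q.tgt b = z := (congrArg Prod.fst hab).symm.trans haz
      rw [← SigmaTau.reflInSide, hQ.reflInSide_inSide_of_tgt_eq st hb hbz] at h
      exact absurd (congrArg Prod.fst h) (hQ.noLoops st b hb)
  · rintro ⟨c, hc, hca, hcz, hcb⟩
    refine ⟨ha, ((st.mem_rel_iff hQ.composable).1 hcb).2.1, ?_⟩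
    rw [hQ.reflInSide_inSide_of_rel st hcb hcz]
    refine Prod.ext (haz.trans hcz.symm) ?_
    simp only [oppSide, SigmaTau.inSide, st.τ_tgt c hc a ha hca (hcz.trans haz.symm)]

theorem mem_reflect_rel_iff_of_src_eq (hQ : IsTriangleAcyclic Q) (st : SigmaTau Q)
    (hz : CanReflect Q z) {a b : ℕ} (ha : a ∈ Q.A) (haz : Q.src a = z) :
    (a, b) ∈ (reflect st z).rel ↔ b ∈ Q.A ∧ Q.tgt b = z ∧ (a, b) ∉ Q.rel := by
  have hex := st.exchangeable_outSide_inSide (hQ.noLoops st) z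
  obtain ⟨c, hac, hcz⟩ := hz.exists_permitted ha haz
  rw [mem_reflect_rel, hQ.reflOutSide_outSide_of_permitted st hac hcz]
  constructor
  · rintro ⟨-, hb, hcb⟩
    rw [← hQ.reflInSide_inSide_of_tgt_eq st hac.2.1 hcz] at hcb
    obtain rfl := st.inSide_injOn hac.2.1 hb (hex.involutive.injective hcb)
    exact ⟨hb, hcz, hac.2.2.2⟩
  · rintro ⟨hb, hbz, hab⟩
    obtain rfl := st.permitted_right_unique hac ⟨ha, hb, haz.trans hbz.symm, hab⟩
    exact ⟨ha, hb, (hQ.reflInSide_inSide_of_tgt_eq st hb hbz).symm⟩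

theorem mem_reflect_rel_iff_of_ne (hQ : IsTriangleAcyclic Q) (st : SigmaTau Q) {a b : ℕ}
    (ha : a ∈ Q.A) (haz : Q.tgt a ≠ z) (haz' : Q.src a ≠ z) :
    (a, b) ∈ (reflect st z).rel ↔ (a, b) ∈ Q.rel := by
  have hex := st.exchangeable_outSide_inSide (hQ.noLoops st) z
  have hfix : st.reflInSide z (st.outSide a) = st.outSide a :=
    st.reflInSide_of_ne haz' (st.outSide_ne_of_tgt_ne ha haz)
  rw [mem_reflect_rel, st.reflOutSide_outSide_of_ne ha haz haz', st.mem_rel_iff hQ.composable]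
  nth_rw 1 [← hfix]
  rw [SigmaTau.reflInSide, hex.involutive.injective.eq_iff]

theorem isReflection (hQ : IsTriangleAcyclic Q) (st : SigmaTau Q) (hz : CanReflect Q z) :
    IsReflection Q z (reflect st z) := by
  refine ⟨hQ.isGentle st, hQ.noLoops st, hz, rfl, rfl, fun a ha haz => ⟨?_, ?_⟩,
    fun a ha haz b hb hbz hab => ?_, fun a ha haz haz' => ?_, fun a ha haz => ⟨?_, fun h => ?_⟩,
    fun a b => ?_⟩
  · exact (congrArg Prod.fst (hQ.reflOutSide_outSide_of_tgt_eq st ha haz)).trans haz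
  · exact congrArg Prod.fst (hQ.reflInSide_inSide_of_tgt_eq st ha haz)
  · exact congrArg Prod.fst
      (hQ.reflOutSide_outSide_of_permitted st ⟨ha, hb, haz.trans hbz.symm, hab⟩ hbz)
  · exact congrArg Prod.fst (st.reflOutSide_outSide_of_ne ha haz haz')
  · rintro ⟨e, -, hez, -, hea⟩
    exact (congrArg Prod.fst (hQ.reflInSide_inSide_of_rel st hea hez)).trans hez
  · refine congrArg Prod.fst
      (st.reflInSide_inSide_of_forall_notMem hQ.composable ha haz fun e he hea => h ?_)
    rw [mem_inArrows] at he
    exact ⟨e, he.1, he.2, (hQ.composable e a hea).2.2, hea⟩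
  · by_cases ha : a ∈ Q.A
    swap
    · have hab : (a, b) ∉ Q.rel := fun h => ha (hQ.composable a b h).1
      simp [mem_reflect_rel, ha, hab]
    have hcomp (c : ℕ) : (c, b) ∈ Q.rel → b ∈ Q.A ∧ Q.src c = Q.tgt b :=
      fun h => (hQ.composable c b h).2
    by_cases haz : Q.tgt a = z
    · have haz' : Q.src a ≠ z := fun h => hQ.noLoops st a ha (h.trans haz.symm)
      rw [hQ.mem_reflect_rel_iff_of_tgt_eq st ha haz]
      grind
    by_cases haz' : Q.src a = z
    · rw [hQ.mem_reflect_rel_iff_of_src_eq st hz ha haz']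
      grind
    · rw [hQ.mem_reflect_rel_iff_of_ne st ha haz haz']
      grind

end IsTriangleAcyclic

/-- The choice of `σ` and `τ` on the reflection given by the sides. -/
noncomputable def IsTriangleAcyclic.reflectSigmaTau (hQ : IsTriangleAcyclic Q) (st : SigmaTau Q)
    (z : ℕ) : SigmaTau (reflect st z) where
  σ a := (st.reflOutSide z (st.outSide a)).2
  τ a := (st.reflInSide z (st.inSide a)).2
  σ_pm a ha := (mem_sides.1 <| hQ.reflOutSide_mem_sides st <|
    st.outSide_mem_sides ha (hQ.ends_mem a ha).1).2
  τ_pm a ha := (mem_sides.1 <| hQ.reflInSide_mem_sides st <|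
    st.inSide_mem_sides ha (hQ.ends_mem a ha).2).2
  σ_src a ha b hb hab h := by
    have hne : st.reflOutSide z (st.outSide a) ≠ st.reflOutSide z (st.outSide b) := fun h =>
      hab <| st.outSide_injOn ha hb <|
        (st.exchangeable_outSide_oppSide_inSide (hQ.noLoops st) z).involutive.injective h
    have hmem {c : ℕ} (hc : c ∈ Q.A) := hQ.reflOutSide_mem_sides st (z := z) <|
      st.outSide_mem_sides hc (hQ.ends_mem c hc).1
    exact congrArg Prod.snd ((eq_or_eq_oppSide (hmem ha) (hmem hb) h).resolve_left hne)
  τ_tgt a ha b hb hab h := by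
    have hne : st.reflInSide z (st.inSide a) ≠ st.reflInSide z (st.inSide b) := fun h =>
      hab <| st.inSide_injOn ha hb <|
        (st.exchangeable_outSide_inSide (hQ.noLoops st) z).involutive.injective h
    have hmem {c : ℕ} (hc : c ∈ Q.A) := hQ.reflInSide_mem_sides st (z := z) <|
      st.inSide_mem_sides hc (hQ.ends_mem c hc).2
    exact congrArg Prod.snd ((eq_or_eq_oppSide (hmem ha) (hmem hb) h).resolve_left hne)
  rel_iff a ha b hb hab := by
    rw [mem_reflect_rel, Prod.ext_iff]
    exact ⟨fun h => h.2.2.2, fun h => ⟨ha, hb, hab, h⟩⟩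

/-! ### Invariance under reflections -/

section

variable {ι α : Type*} [Nonempty ι] {E : Finset ι} {u v : ι → α}

theorem Exchangeable.apply_exchange_of_forall_eq {β : Type*} (h : Exchangeable E u v) {F : α → β}
    (hF : ∀ i ∈ E, F (u i) = F (v i)) (p : α) : F (exchange E u v p) = F p := by
  obtain ⟨i, hi, rfl, hp⟩ | ⟨i, hi, rfl, hp⟩ | hp := h.exchange_cases p
  · rw [hp, hF i hi]
  · rw [hp, hF i hi]
  · rw [hp]

open Classical in
/-- The change along `exchange E u v` of a function whose values at `u i` and `v i` differ
by `g i`. -/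
noncomputable def exchangeWeight (E : Finset ι) (u v : ι → α) (g : ι → ZMod 2) (p : α) : ZMod 2 :=
  if p ∈ u '' E then g (Function.invFunOn u E p)
  else if p ∈ v '' E then g (Function.invFunOn v E p) else 0

variable {g : ι → ZMod 2}

theorem Exchangeable.exchangeWeight_left (h : Exchangeable E u v) {i : ι} (hi : i ∈ E) :
    exchangeWeight E u v g (u i) = g i := by
  rw [exchangeWeight, if_pos ⟨i, hi, rfl⟩, h.injOn_left.leftInvOn_invFunOn hi]

theorem Exchangeable.exchangeWeight_right (h : Exchangeable E u v) {i : ι} (hi : i ∈ E) :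
    exchangeWeight E u v g (v i) = g i := by
  have hu : v i ∉ u '' E := fun ⟨j, hj, hji⟩ => h.ne j hj i hi hji
  rw [exchangeWeight, if_neg hu, if_pos ⟨i, hi, rfl⟩, h.injOn_right.leftInvOn_invFunOn hi]

theorem exchangeWeight_of_forall_ne {p : α} (hu : ∀ i ∈ E, u i ≠ p) (hv : ∀ i ∈ E, v i ≠ p) :
    exchangeWeight E u v g p = 0 := by
  rw [exchangeWeight, if_neg fun ⟨i, hi, h⟩ => hu i hi h, if_neg fun ⟨i, hi, h⟩ => hv i hi h]

theorem Exchangeable.apply_exchange (h : Exchangeable E u v) {f : α → ZMod 2}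
    (hf : ∀ i ∈ E, f (u i) + f (v i) = g i) (p : α) :
    f (exchange E u v p) = f p + exchangeWeight E u v g p := by
  by_cases hu : ∃ i ∈ E, u i = p
  · obtain ⟨i, hi, rfl⟩ := hu
    rw [h.exchange_left hi, h.exchangeWeight_left hi, ← hf i hi, CharTwo.add_cancel_left]
  by_cases hv : ∃ i ∈ E, v i = p
  · obtain ⟨i, hi, rfl⟩ := hv
    rw [h.exchange_right hi, h.exchangeWeight_right hi, ← hf i hi, add_comm (f (u i)),
      CharTwo.add_cancel_left]
  · push Not at hu hv
    rw [exchange_of_forall_ne hu hv, exchangeWeight_of_forall_ne hu hv, add_zero]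

end

namespace IsTriangleAcyclic

variable {z : ℕ}

theorem apply_reflect_src (hQ : IsTriangleAcyclic Q) (st : SigmaTau Q) {β : Type*} {F : ℕ → β}
    (hF : ∀ e ∈ inArrows Q z, F (Q.src e) = F (Q.tgt e)) (a : ℕ) :
    F ((reflect st z).src a) = F (Q.src a) :=
  (st.exchangeable_outSide_oppSide_inSide (hQ.noLoops st) z).apply_exchange_of_forall_eq
    (F := fun p => F p.1) hF (st.outSide a)

theorem apply_reflect_tgt (hQ : IsTriangleAcyclic Q) (st : SigmaTau Q) {β : Type*} {F : ℕ → β}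
    (hF : ∀ e ∈ inArrows Q z, F (Q.src e) = F (Q.tgt e)) (a : ℕ) :
    F ((reflect st z).tgt a) = F (Q.tgt a) :=
  (st.exchangeable_outSide_inSide (hQ.noLoops st) z).apply_exchange_of_forall_eq
    (F := fun p => F p.1) hF (st.inSide a)

theorem reflect_src_of_tgt_eq (hQ : IsTriangleAcyclic Q) (st : SigmaTau Q) {a : ℕ} (ha : a ∈ Q.A)
    (haz : Q.tgt a = z) : (reflect st z).src a = z :=
  (congrArg Prod.fst (hQ.reflOutSide_outSide_of_tgt_eq st ha haz)).trans haz

theorem reflect_tgt_of_tgt_eq (hQ : IsTriangleAcyclic Q) (st : SigmaTau Q) {a : ℕ} (ha : a ∈ Q.A)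
    (haz : Q.tgt a = z) : (reflect st z).tgt a = Q.src a :=
  congrArg Prod.fst (hQ.reflInSide_inSide_of_tgt_eq st ha haz)

theorem connected_reflect (hQ : IsTriangleAcyclic Q) (st : SigmaTau Q) (z : ℕ) :
    Connected (reflect st z) := by
  refine connected_iff_forall_arrowClosed.2 fun X hX =>
    connected_iff_forall_arrowClosed.1 hQ.connected X fun a ha => ?_
  have hconst : ∀ e ∈ inArrows Q z, (Q.src e ∈ X) = (Q.tgt e ∈ X) := by
    intro e he
    obtain ⟨he, hez⟩ := mem_inArrows.1 he
    have := hX e he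
    rw [hQ.reflect_src_of_tgt_eq st he hez, hQ.reflect_tgt_of_tgt_eq st he hez] at this
    rw [hez, this]
  have hXa := hX a ha
  rwa [hQ.apply_reflect_src st hconst, hQ.apply_reflect_tgt st hconst] at hXa

theorem reflect_composable (st : SigmaTau Q) (z : ℕ) : RelComposable (reflect st z) := by
  intro a b hab
  obtain ⟨ha, hb, h⟩ := mem_reflect_rel.1 hab
  exact ⟨ha, hb, congrArg Prod.fst h⟩

end IsTriangleAcyclic

/-- The cochain on `Q` which becomes `g` after the reflection at `z`. -/
noncomputable def SigmaTau.reflPullback (st : SigmaTau Q) (z : ℕ) (g : ℕ → ZMod 2) (a : ℕ) :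
    ZMod 2 :=
  g a + exchangeWeight (inArrows Q z) st.outSide (fun e => oppSide (st.inSide e)) g (st.outSide a) +
    exchangeWeight (inArrows Q z) st.outSide st.inSide g (st.inSide a)

namespace IsTriangleAcyclic

variable {z : ℕ} {g : ℕ → ZMod 2}

theorem reflPullback_of_tgt_eq (hQ : IsTriangleAcyclic Q) (st : SigmaTau Q) {e : ℕ}
    (he : e ∈ inArrows Q z) : st.reflPullback z g e = g e := by
  rw [SigmaTau.reflPullback,
    (st.exchangeable_outSide_oppSide_inSide (hQ.noLoops st) z).exchangeWeight_left he,
    (st.exchangeable_outSide_inSide (hQ.noLoops st) z).exchangeWeight_right he,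
    CharTwo.add_self_eq_zero, zero_add]

theorem isPotential_reflect (hQ : IsTriangleAcyclic Q) (st : SigmaTau Q) {f : ℕ → ZMod 2}
    (hf : IsPotential Q f (st.reflPullback z g)) : IsPotential (reflect st z) f g := by
  have hfe : ∀ e ∈ inArrows Q z, f (Q.src e) + f (Q.tgt e) = g e := fun e he => by
    rw [hf e (mem_inArrows.1 he).1, hQ.reflPullback_of_tgt_eq st he]
  intro a ha
  have hout := (st.exchangeable_outSide_oppSide_inSide (hQ.noLoops st) z).apply_exchange
    (f := fun p => f p.1) hfe (st.outSide a)
  have hin := (st.exchangeable_outSide_inSide (hQ.noLoops st) z).apply_exchange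
    (f := fun p => f p.1) hfe (st.inSide a)
  have hfa : f (Q.src a) + f (Q.tgt a) = _ := hf a ha
  change f (st.reflOutSide z (st.outSide a)).1 + f (st.reflInSide z (st.inSide a)).1 = g a
  rw [SigmaTau.reflPullback] at hfa
  rw [SigmaTau.reflOutSide, SigmaTau.reflInSide, hout, hin]
  change f (Q.src a) + _ + (f (Q.tgt a) + _) = _
  grind

theorem reflPullback_of_ne (st : SigmaTau Q) (hc : RelComposable Q) {a c : ℕ}
    (haz : Q.tgt a ≠ z) (haz' : Q.src a ≠ z) (hca : (c, a) ∈ Q.rel) (hcz : Q.tgt c ≠ z) :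
    st.reflPullback z g a = g a := by
  obtain ⟨hc, ha, hside⟩ := (st.mem_rel_iff hc).1 hca
  rw [SigmaTau.reflPullback, exchangeWeight_of_forall_ne (st.outSide_ne_of_tgt_ne ha haz),
    exchangeWeight_of_forall_ne (hside ▸ st.outSide_ne_of_tgt_ne hc hcz), add_zero, add_zero]
  · exact fun e he h => haz ((congrArg Prod.fst h).symm.trans (mem_inArrows.1 he).2)
  · exact fun e he h => haz' ((congrArg Prod.fst h).symm.trans (mem_inArrows.1 he).2)

theorem isTriangleTriple_reflect_of_src_eq (hQ : IsTriangleAcyclic Q) (st : SigmaTau Q)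
    {a b c e : ℕ} (hT : IsTriangleTriple Q a b c) (haz : Q.src a = z) (hae : Permitted Q a e) :
    IsTriangleTriple (reflect st z) a e c := by
  have hsides {x y : ℕ} (h : (x, y) ∈ Q.rel) := ((st.mem_rel_iff hQ.composable).1 h).2.2
  have hloop := hQ.noLoops st
  have hbz : Q.tgt b = z := hT.src_eq_tgt.symm.trans haz
  have hez : Q.tgt e = z := hae.2.2.1.symm.trans haz
  have htc : Q.tgt c ≠ z := hT.rotate.src_eq_tgt ▸ hbz ▸ hloop b hT.rotate.mem
  have hsc : Q.src c ≠ z := hT.rotate.rotate.src_eq_tgt ▸ haz ▸ (hloop a hT.mem).symm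
  have hcA := hT.rotate.rotate.mem
  refine (reflect_composable st z).isTriangleTriple ?_ ?_ hT.rotate.rotate.ne.symm ?_ ?_ ?_
  · rintro rfl; exact hloop a hT.mem (haz.trans hez.symm)
  · rintro rfl; exact htc hez
  · refine mem_reflect_rel.2 ⟨hT.mem, hae.2.1, ?_⟩
    rw [hQ.reflOutSide_outSide_of_permitted st hae hez,
      hQ.reflInSide_inSide_of_tgt_eq st hae.2.1 hez]
  · refine mem_reflect_rel.2 ⟨hae.2.1, hcA, ?_⟩
    rw [hQ.reflOutSide_outSide_of_tgt_eq st hae.2.1 hez,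
      hQ.reflInSide_inSide_of_rel st hT.rotate.rel hbz, ← (st.permitted_iff.1 hae).2.2,
      hsides hT.rel]
  · refine mem_reflect_rel.2 ⟨hcA, hT.mem, ?_⟩
    rw [st.reflOutSide_outSide_of_ne hcA htc hsc, ← hsides hT.rotate.rotate.rel,
      st.reflInSide_of_ne hsc (st.outSide_ne_of_tgt_ne hcA htc)]

theorem isTriangleTriple_reflect_of_ne (hQ : IsTriangleAcyclic Q) (st : SigmaTau Q) {a b c : ℕ}
    (hT : IsTriangleTriple Q a b c) (haz : Q.src a ≠ z) (hbz : Q.src b ≠ z) (hcz : Q.src c ≠ z) :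
    IsTriangleTriple (reflect st z) a b c := by
  refine (reflect_composable st z).isTriangleTriple hT.ne hT.rotate.ne hT.rotate.rotate.ne.symm
    ?_ ?_ ?_
  · exact (hQ.mem_reflect_rel_iff_of_ne st hT.mem (hT.rotate.rotate.src_eq_tgt ▸ hcz) haz).2 hT.rel
  · exact (hQ.mem_reflect_rel_iff_of_ne st hT.rotate.mem (hT.src_eq_tgt ▸ haz) hbz).2 hT.rotate.rel
  · exact (hQ.mem_reflect_rel_iff_of_ne st hT.rotate.rotate.mem (hT.rotate.src_eq_tgt ▸ hbz) hcz).2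
      hT.rotate.rotate.rel

theorem sum_reflPullback_of_src_eq (hQ : IsTriangleAcyclic Q) (st : SigmaTau Q)
    (hz : CanReflect Q z) (hg : IsCocycle (reflect st z) g) {a b c : ℕ}
    (hT : IsTriangleTriple Q a b c) (haz : Q.src a = z) :
    st.reflPullback z g a + st.reflPullback z g b + st.reflPullback z g c = 0 := by
  obtain ⟨e, hae, hez⟩ := hz.exists_permitted hT.mem haz
  have hsides {x y : ℕ} (h : (x, y) ∈ Q.rel) := ((st.mem_rel_iff hQ.composable).1 h).2.2
  have hloop := hQ.noLoops st
  have hout := st.exchangeable_outSide_oppSide_inSide hloop z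
  have hin := st.exchangeable_outSide_inSide hloop z
  have hb : b ∈ inArrows Q z := mem_inArrows.2 ⟨hT.rotate.mem, hT.src_eq_tgt.symm.trans haz⟩
  have he : e ∈ inArrows Q z := mem_inArrows.2 ⟨hae.2.1, hez⟩
  have htc : Q.tgt c ≠ z := hT.rotate.src_eq_tgt ▸ (mem_inArrows.1 hb).2 ▸ hloop b hT.rotate.mem
  have hsc : Q.src c ≠ z := hT.rotate.rotate.src_eq_tgt ▸ haz ▸ (hloop a hT.mem).symm
  have hc := st.outSide_ne_of_tgt_ne hT.rotate.rotate.mem htc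
  have pull_a : st.reflPullback z g a = g a + g e := by
    rw [SigmaTau.reflPullback, (st.permitted_iff.1 hae).2.2, hout.exchangeWeight_right he,
      ← hsides hT.rotate.rotate.rel, exchangeWeight_of_forall_ne hc, add_zero]
    exact fun i hi h => hsc ((congrArg Prod.fst h).symm.trans (mem_inArrows.1 hi).2)
  have pull_c : st.reflPullback z g c = g c + g b := by
    rw [SigmaTau.reflPullback, ← hsides hT.rotate.rel, hin.exchangeWeight_left hb,
      exchangeWeight_of_forall_ne hc, add_zero]
    exact fun i hi h => hsc ((congrArg Prod.fst h).symm.trans (mem_inArrows.1 hi).2)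
  have hsum := hg a e c (hQ.isTriangleTriple_reflect_of_src_eq st hT haz hae)
  rw [pull_a, hQ.reflPullback_of_tgt_eq st hb, pull_c]
  linear_combination hsum + CharTwo.add_self_eq_zero (g b)

theorem isCocycle_reflPullback (hQ : IsTriangleAcyclic Q) (st : SigmaTau Q) (hz : CanReflect Q z)
    (hg : IsCocycle (reflect st z) g) : IsCocycle Q (st.reflPullback z g) := by
  intro a b c hT
  by_cases haz : Q.src a = z
  · exact hQ.sum_reflPullback_of_src_eq st hz hg hT haz
  by_cases hbz : Q.src b = z
  · rw [← hQ.sum_reflPullback_of_src_eq st hz hg hT.rotate hbz]; ring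
  by_cases hcz : Q.src c = z
  · rw [← hQ.sum_reflPullback_of_src_eq st hz hg hT.rotate.rotate hcz]; ring
  have hta := hT.rotate.rotate.src_eq_tgt ▸ hcz
  have htb := hT.src_eq_tgt ▸ haz
  have htc := hT.rotate.src_eq_tgt ▸ hbz
  rw [reflPullback_of_ne st hQ.composable hta haz hT.rotate.rotate.rel htc,
    reflPullback_of_ne st hQ.composable htb hbz hT.rel hta,
    reflPullback_of_ne st hQ.composable htc hcz hT.rotate.rel htb]
  exact hg a b c (hQ.isTriangleTriple_reflect_of_ne st hT haz hbz hcz)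

protected theorem reflect (hQ : IsTriangleAcyclic Q) (st : SigmaTau Q) (hz : CanReflect Q z) :
    IsTriangleAcyclic (reflect st z) where
  ends_mem a ha :=
    ⟨(mem_sides.1 <| hQ.reflOutSide_mem_sides st <|
        st.outSide_mem_sides ha (hQ.ends_mem a ha).1).1,
      (mem_sides.1 <| hQ.reflInSide_mem_sides st <|
        st.inSide_mem_sides ha (hQ.ends_mem a ha).2).1⟩
  connected := hQ.connected_reflect st z
  composable := reflect_composable st z
  card_lt := hQ.card_lt
  exists_potential g hg := by
    obtain ⟨f, hf⟩ := hQ.exists_potential _ (hQ.isCocycle_reflPullback st hz hg)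
    exact ⟨f, hQ.isPotential_reflect st hf⟩

end IsTriangleAcyclic

/-! ### Shrinking a cut -/

theorem ArrowClosed.eq_empty (hQ : Connected Q) {X : Finset ℕ} (hX : ArrowClosed Q X)
    (hXV : X ⊆ Q.V) {x : ℕ} (hx : x ∈ Q.V) (hxX : x ∉ X) : X = ∅ := by
  by_contra hne
  obtain ⟨y, hy⟩ := Finset.nonempty_iff_ne_empty.2 hne
  exact hxX (connected_iff_forall_arrowClosed.1 hQ X hX ⟨y, hy, hXV hy⟩ hx)

theorem IsCut.ssubset (hQ : IsTriangleAcyclic Q) {α a : ℕ} {D E : Finset ℕ} (hD : IsCut Q α D)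
    (hα : α ∈ Q.A) (ha : a ∈ Q.A) (haα : a ≠ α) (hEV : E ⊆ Q.V)
    (hE : ∀ b ∈ Q.A, b ≠ a → (Q.src b ∈ E ↔ Q.tgt b ∈ E)) (hαE : Q.src α ∉ E)
    (haD : Q.src a ∈ D) (haE : Q.src a ∉ E ∨ Q.tgt a ∉ E) : E ⊂ D := by
  have haD' : Q.tgt a ∈ D := (hD.src_mem_iff a ha haα).1 haD
  have hclosed : ArrowClosed Q ↑(E \ D) := by
    intro e he
    simp only [Finset.mem_coe, Finset.mem_sdiff]
    have := hD.tgt_mem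
    have heD := hD.src_mem_iff e he
    have heE := hE e he
    grind
  refine (Finset.ssubset_iff_of_subset ?_).2 ?_
  · exact Finset.sdiff_eq_empty_iff_subset.1 <| hclosed.eq_empty hQ.connected
      (Finset.sdiff_subset.trans hEV) (hQ.ends_mem α hα).1 fun h => hαE (Finset.mem_sdiff.1 h).1
  · exact haE.elim (⟨_, haD, ·⟩) (⟨_, haD', ·⟩)

theorem IsCut.exists_ssubset (hQ : IsTriangleAcyclic Q) (st : SigmaTau Q) {α a b : ℕ}
    {D : Finset ℕ} (hD : IsCut Q α D) (hα : α ∈ Q.A) (hab : (a, b) ∈ Q.rel) (haD : Q.src a ∈ D)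
    (hn : ¬ InTriangle Q a) : ∃ E, E ⊂ D ∧ (IsCut Q a E ∨ IsCut (opQR Q) b E) := by
  obtain ⟨ha, hb, hsrc⟩ := hQ.composable a b hab
  have haα : a ≠ α := by rintro rfl; exact hD.src_notMem haD
  have hab_ne : a ≠ b := by rintro rfl; exact hQ.not_rel_self st a hab
  obtain ⟨E, hE⟩ := hQ.exists_isCut ha hn
  by_cases hαE : Q.src α ∈ E
  swap
  · exact ⟨E, hD.ssubset hQ hα ha haα hE.subset hE.src_mem_iff hαE haD (.inl hE.src_notMem),
      .inl hE⟩
  have hbα : b ≠ α := by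
    rintro rfl
    exact hE.src_notMem (hsrc ▸ (hE.src_mem_iff b hb hab_ne.symm).1 hαE)
  obtain ⟨F, hF⟩ := hQ.exists_isCut hb ((inTriangle_iff_of_rel st hQ.composable hab).not.1 hn)
  refine ⟨Q.V \ F, hD.ssubset hQ hα hb hbα Finset.sdiff_subset
    (fun e he heb => ((hF.op hQ hb).src_mem_iff e he heb).symm) ?_ ?_
    (.inr (hF.op hQ hb).src_notMem), .inr (hF.op hQ hb)⟩
  · intro hαF
    have hclosed : ArrowClosed Q ↑(E \ F) := by
      intro e he
      simp only [Finset.mem_coe, Finset.mem_sdiff]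
      have heE := hE.src_mem_iff e he
      have heF := hF.src_mem_iff e he
      have haE := hE.src_notMem
      have hbF := hF.tgt_mem
      grind
    have hempty := hclosed.eq_empty hQ.connected (Finset.sdiff_subset.trans hE.subset)
      (hQ.ends_mem a ha).1 fun h => hE.src_notMem (Finset.mem_sdiff.1 h).1
    exact Finset.notMem_empty _ (hempty ▸ Finset.mem_sdiff.2 ⟨hαE, (Finset.mem_sdiff.1 hαF).2⟩)
  · exact (hD.src_mem_iff b hb hbα).2 (hsrc ▸ haD)

namespace IsTriangleAcyclic

variable {z : ℕ}

theorem mem_reflect_rel_iff_of_tgt_right_eq (hQ : IsTriangleAcyclic Q) (st : SigmaTau Q) {a b : ℕ}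
    (hb : b ∈ Q.A) (hbz : Q.tgt b = z) : (a, b) ∈ (reflect st z).rel ↔ Permitted Q a b := by
  have hex := st.exchangeable_outSide_oppSide_inSide (hQ.noLoops st) z
  have hswap : st.reflOutSide z (oppSide (st.inSide b)) = st.outSide b :=
    hex.exchange_right (mem_inArrows.2 ⟨hb, hbz⟩)
  rw [mem_reflect_rel, hQ.reflInSide_inSide_of_tgt_eq st hb hbz, ← hswap, st.permitted_iff,
    SigmaTau.reflOutSide, hex.involutive.injective.eq_iff]

theorem exists_rel_of_mem_reflect_rel (hQ : IsTriangleAcyclic Q) (st : SigmaTau Q)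
    (hz : CanReflect Q z) {a b : ℕ} (hab : (a, b) ∈ (reflect st z).rel)
    (hbz : Q.tgt b ≠ z) : ∃ c, (c, b) ∈ Q.rel := by
  have ha : a ∈ Q.A := (mem_reflect_rel.1 hab).1
  by_cases haz : Q.tgt a = z
  · obtain ⟨c, -, -, -, hcb⟩ := (hQ.mem_reflect_rel_iff_of_tgt_eq st ha haz).1 hab
    exact ⟨c, hcb⟩
  by_cases haz' : Q.src a = z
  · exact absurd ((hQ.mem_reflect_rel_iff_of_src_eq st hz ha haz').1 hab).2.1 hbz
  · exact ⟨a, (hQ.mem_reflect_rel_iff_of_ne st ha haz haz').1 hab⟩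

theorem reflect_tgt_eq_or (hQ : IsTriangleAcyclic Q) (st : SigmaTau Q) {a : ℕ}
    (haz : Q.tgt a ≠ z) :
    (reflect st z).tgt a = z ∨ (reflect st z).tgt a = Q.tgt a := by
  obtain ⟨e, he, -, h⟩ | ⟨e, he, hea, -⟩ | h :=
    (st.exchangeable_outSide_inSide (hQ.noLoops st) z).exchange_cases (st.inSide a)
  · exact .inl ((congrArg Prod.fst h).trans (mem_inArrows.1 he).2)
  · exact absurd ((congrArg Prod.fst hea).trans (mem_inArrows.1 he).2) haz
  · exact .inr (congrArg Prod.fst h)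

end IsTriangleAcyclic

theorem SigmaTau.card_image_snd_rel (st : SigmaTau Q) (hc : RelComposable Q) :
    (Q.rel.image Prod.snd).card = Q.rel.card :=
  Finset.card_image_of_injOn fun ρ hρ ρ' hρ' h =>
    Prod.ext (st.rel_left_unique hc hρ (by rw [h]; exact hρ')) h

theorem SigmaTau.card_rel_le {Q' : QuivRel} (st : SigmaTau Q) (st' : SigmaTau Q')
    (hc : RelComposable Q) (hc' : RelComposable Q') {α y : ℕ}
    (h : ∀ a b, (a, b) ∈ Q'.rel → b ≠ α → b ≠ y ∧ ∃ c, (c, b) ∈ Q.rel)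
    (hα : ∀ a, (a, α) ∈ Q'.rel → ∃ c, (c, y) ∈ Q.rel) : Q'.rel.card ≤ Q.rel.card := by
  rw [← st.card_image_snd_rel hc, ← st'.card_image_snd_rel hc']
  refine Finset.card_le_card_of_injOn (Equiv.swap α y) ?_ (Equiv.injective _).injOn
  intro b hb
  obtain ⟨⟨a, b⟩, hab, rfl⟩ := Finset.mem_image.1 hb
  simp only [Finset.coe_image, Set.mem_image, Finset.mem_coe, Prod.exists, exists_eq_right]
  by_cases hbα : b = α
  · subst hbα
    rw [Equiv.swap_apply_left]
    exact hα a hab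
  · obtain ⟨hby, hb'⟩ := h a b hab hbα
    rwa [Equiv.swap_apply_of_ne_of_ne hbα hby]

/-- A cut by an arrow `α` at whose terminus one reflects: every arrow starting at this terminus
may be followed by `α`. -/
structure IsReflectingCut (Q : QuivRel) (α : ℕ) (D : Finset ℕ) : Prop extends IsCut Q α D where
  mem : α ∈ Q.A
  permitted : ∀ b ∈ Q.A, Q.src b = Q.tgt α → Permitted Q b α

namespace IsReflectingCut

variable {α : ℕ} {D : Finset ℕ}

theorem canReflect (hD : IsReflectingCut Q α D) (hQ : IsTriangleAcyclic Q) :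
    CanReflect Q (Q.tgt α) :=
  ⟨(hQ.ends_mem α hD.mem).2, fun b hb hbz => ⟨α, hD.mem, rfl, (hD.permitted b hb hbz).2.2.2⟩⟩

theorem eq_of_mem_reflect_rel (hD : IsReflectingCut Q α D) (hQ : IsTriangleAcyclic Q)
    (st : SigmaTau Q) {b c : ℕ} (hcb : (c, b) ∈ (reflect st (Q.tgt α)).rel)
    (hb : Q.tgt b = Q.tgt α) : b = α := by
  have hbA : b ∈ Q.A := (mem_reflect_rel.1 hcb).2.1
  have hperm := (hQ.mem_reflect_rel_iff_of_tgt_right_eq st hbA hb).1 hcb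
  exact st.permitted_right_unique hperm (hD.permitted c hperm.1 (hperm.2.2.1.trans hb))

theorem exists_rel_of_mem_reflect_rel (hD : IsReflectingCut Q α D) (hQ : IsTriangleAcyclic Q)
    (st : SigmaTau Q) {b c : ℕ} (hcb : (c, b) ∈ (reflect st (Q.tgt α)).rel) (hb : b ≠ α) :
    ∃ e, (e, b) ∈ Q.rel :=
  hQ.exists_rel_of_mem_reflect_rel st (hD.canReflect hQ) hcb
    fun h => hb (hD.eq_of_mem_reflect_rel hQ st hcb h)

theorem ssubset_of_isCut_reflect (hD : IsReflectingCut Q α D) (hQ : IsTriangleAcyclic Q)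
    (st : SigmaTau Q) {a : ℕ} {E : Finset ℕ} (hE : IsCut (reflect st (Q.tgt α)) a E) (haα : a ≠ α)
    (hsrc : (reflect st (Q.tgt α)).src a = Q.tgt α ∨ (reflect st (Q.tgt α)).src a = Q.src α)
    (htgt : (reflect st (Q.tgt α)).tgt a ∈ D) : E ⊂ D := by
  have hQ' := hQ.reflect st (hD.canReflect hQ)
  have hαE : Q.tgt α ∈ E ↔ Q.src α ∈ E := by
    have := hE.src_mem_iff α hD.mem haα.symm
    rwa [hQ.reflect_src_of_tgt_eq st hD.mem rfl, hQ.reflect_tgt_of_tgt_eq st hD.mem rfl] at this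
  have hzE : Q.tgt α ∉ E := by
    rcases hsrc with h | h
    · exact h ▸ hE.src_notMem
    · exact hαE.not.2 (h ▸ hE.src_notMem)
  have hclosed : ArrowClosed (reflect st (Q.tgt α)) ↑(E \ D) := by
    intro e he
    simp only [Finset.mem_coe, Finset.mem_sdiff]
    by_cases hea : e = a
    · subst hea
      exact iff_of_false (fun h => hE.src_notMem h.1) (fun h => h.2 htgt)
    have heE := hE.src_mem_iff e he hea
    have heD := hD.src_mem_iff e he
    by_cases hez : Q.tgt e = Q.tgt α
    · rw [hQ.reflect_src_of_tgt_eq st he hez, hQ.reflect_tgt_of_tgt_eq st he hez] at heE ⊢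
      grind
    have htgt_e := hQ.reflect_tgt_eq_or st hez
    by_cases hez' : Q.src e = Q.tgt α
    · have : (reflect st (Q.tgt α)).src e = Q.src α := congrArg Prod.fst
        (hQ.reflOutSide_outSide_of_permitted st (hD.permitted e he hez') rfl)
      grind
    · have : (reflect st (Q.tgt α)).src e = Q.src e := congrArg Prod.fst
        (st.reflOutSide_outSide_of_ne he hez hez')
      grind
  have hempty := hclosed.eq_empty hQ'.connected (Finset.sdiff_subset.trans hE.subset)
    (hQ.ends_mem α hD.mem).2 fun h => hzE (Finset.mem_sdiff.1 h).1
  exact (Finset.ssubset_iff_of_subset (Finset.sdiff_eq_empty_iff_subset.1 hempty)).2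
    ⟨_, hD.tgt_mem, hzE⟩

theorem exists_isCut_reflect_of_tgt_eq (hD : IsReflectingCut Q α D) (hQ : IsTriangleAcyclic Q)
    (st : SigmaTau Q) {β : ℕ} (hβ : (α, β) ∈ Q.rel) {a : ℕ} (ha : a ∈ Q.A) (haα : a ≠ α)
    (haz : Q.tgt a = Q.tgt α) :
    (reflect st (Q.tgt α)).rel.card ≤ Q.rel.card ∧ (a, β) ∈ (reflect st (Q.tgt α)).rel ∧
      ∃ E, E ⊂ D ∧ IsCut (reflect st (Q.tgt α)) a E := by
  have hQ' := hQ.reflect st (hD.canReflect hQ)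
  refine ⟨?_, ?_, ?_⟩
  · refine st.card_rel_le (hQ.reflectSigmaTau st _) hQ.composable hQ'.composable (α := α) (y := a)
      (fun c b hcb hbα => ⟨?_, hD.exists_rel_of_mem_reflect_rel hQ st hcb hbα⟩) fun c hc => ⟨c, ?_⟩
    · rintro rfl
      exact hbα (hD.eq_of_mem_reflect_rel hQ st hcb haz)
    · by_contra hca
      have hcα := (hQ.mem_reflect_rel_iff_of_tgt_right_eq st hD.mem rfl).1 hc
      exact haα <| st.permitted_right_unique ⟨hcα.1, ha, hcα.2.2.1.trans haz.symm, hca⟩ hcα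
  · exact (hQ.mem_reflect_rel_iff_of_tgt_eq st ha haz).2 ⟨α, hD.mem, haα.symm, rfl, hβ⟩
  · have hn : ¬ InTriangle (reflect st (Q.tgt α)) a := fun ⟨_, _, hT⟩ =>
      haα (hD.eq_of_mem_reflect_rel hQ st hT.rotate.rotate.rel haz)
    obtain ⟨E, hE⟩ := hQ'.exists_isCut ha hn
    refine ⟨E, hD.ssubset_of_isCut_reflect hQ st hE haα
      (.inl (hQ.reflect_src_of_tgt_eq st ha haz)) ?_, hE⟩
    rw [hQ.reflect_tgt_of_tgt_eq st ha haz]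
    exact (hD.src_mem_iff a ha haα).2 (haz ▸ hD.tgt_mem)

theorem notMem_reflect_rel_left (hD : IsReflectingCut Q α D) (hQ : IsTriangleAcyclic Q)
    (st : SigmaTau Q) (hα : ∀ a ∈ Q.A, Q.tgt a = Q.tgt α → a = α) (c : ℕ) :
    (α, c) ∉ (reflect st (Q.tgt α)).rel := by
  rw [hQ.mem_reflect_rel_iff_of_tgt_eq st hD.mem rfl]
  rintro ⟨a, ha, haα, haz, -⟩
  exact haα (hα a ha haz)

theorem notMem_reflect_rel_right (hD : IsReflectingCut Q α D) (hQ : IsTriangleAcyclic Q)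
    (st : SigmaTau Q) (hα : ∀ a ∈ Q.A, Q.tgt a = Q.tgt α → a = α) {β : ℕ} (hβ : (α, β) ∈ Q.rel)
    (c : ℕ) : (c, β) ∉ (reflect st (Q.tgt α)).rel := by
  intro h
  have hc : c ∈ Q.A := (mem_reflect_rel.1 h).1
  have hcα : c ≠ α := by rintro rfl; exact hD.notMem_reflect_rel_left hQ st hα β h
  have hcz : Q.tgt c ≠ Q.tgt α := fun hcz => hcα (hα c hc hcz)
  by_cases hcz' : Q.src c = Q.tgt α
  · obtain ⟨hβA, hβz, -⟩ :=
      (hQ.mem_reflect_rel_iff_of_src_eq st (hD.canReflect hQ) hc hcz').1 h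
    exact hQ.not_rel_self st α (by rwa [hα β hβA hβz] at hβ)
  · have hcβ := (hQ.mem_reflect_rel_iff_of_ne st hc hcz hcz').1 h
    exact hcα (st.rel_left_unique hQ.composable hcβ hβ)

theorem exists_isCut_reflect_of_src_eq (hD : IsReflectingCut Q α D) (hQ : IsTriangleAcyclic Q)
    (st : SigmaTau Q) (hα : ∀ a ∈ Q.A, Q.tgt a = Q.tgt α → a = α) {β : ℕ} (hβ : (α, β) ∈ Q.rel)
    {b : ℕ} (hb : b ∈ Q.A) (hbz : Q.src b = Q.tgt α) :
    (reflect st (Q.tgt α)).rel.card ≤ Q.rel.card ∧ (b, α) ∈ (reflect st (Q.tgt α)).rel ∧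
      ∃ E, E ⊂ D ∧ IsCut (reflect st (Q.tgt α)) b E := by
  have hQ' := hQ.reflect st (hD.canReflect hQ)
  have st' := hQ.reflectSigmaTau st (Q.tgt α)
  have hbα : b ≠ α := by rintro rfl; exact hQ.noLoops st b hb hbz
  have hrel : (b, α) ∈ (reflect st (Q.tgt α)).rel :=
    (hQ.mem_reflect_rel_iff_of_tgt_right_eq st hD.mem rfl).2 (hD.permitted b hb hbz)
  refine ⟨?_, hrel, ?_⟩
  · refine st.card_rel_le st' hQ.composable hQ'.composable (α := α) (y := β)
      (fun c e hce heα => ⟨?_, hD.exists_rel_of_mem_reflect_rel hQ st hce heα⟩) fun _ _ => ⟨α, hβ⟩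
    rintro rfl
    exact hD.notMem_reflect_rel_right hQ st hα hβ c hce
  · have hn : ¬ InTriangle (reflect st (Q.tgt α)) b := by
      rintro ⟨a, c, hT⟩
      obtain rfl := st'.rel_right_unique hQ'.composable hT.rel hrel
      exact hD.notMem_reflect_rel_left hQ st hα c hT.rotate.rel
    obtain ⟨E, hE⟩ := hQ'.exists_isCut hb hn
    refine ⟨E, hD.ssubset_of_isCut_reflect hQ st hE hbα (.inr ?_) ?_, hE⟩
    · exact congrArg Prod.fst
        (hQ.reflOutSide_outSide_of_permitted st (hD.permitted b hb hbz) rfl)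
    · obtain h | h := hQ.reflect_tgt_eq_or st fun h => hbα (hα b hb h)
      · rw [h]
        exact hD.tgt_mem
      · rw [h]
        exact (hD.src_mem_iff b hb hbα).1 (hbz ▸ hD.tgt_mem)

theorem card_reflect_rel_lt (hD : IsReflectingCut Q α D) (hQ : IsTriangleAcyclic Q)
    (st : SigmaTau Q) (hα : ∀ a ∈ Q.A, Q.tgt a = Q.tgt α → a = α)
    (hz : ∀ b ∈ Q.A, Q.src b ≠ Q.tgt α) {β : ℕ} (hβ : (α, β) ∈ Q.rel) :
    (reflect st (Q.tgt α)).rel.card < Q.rel.card := by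
  have hQ' := hQ.reflect st (hD.canReflect hQ)
  rw [← st.card_image_snd_rel hQ.composable,
    ← (hQ.reflectSigmaTau st (Q.tgt α)).card_image_snd_rel hQ'.composable]
  refine Finset.card_lt_card ((Finset.ssubset_iff_of_subset ?_).2 ⟨β, ?_, ?_⟩)
  · intro b hb
    obtain ⟨⟨c, b⟩, hcb, rfl⟩ := Finset.mem_image.1 hb
    have hbα : b ≠ α := by
      rintro rfl
      have hperm := (hQ.mem_reflect_rel_iff_of_tgt_right_eq st hD.mem rfl).1 hcb
      exact hz c hperm.1 hperm.2.2.1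
    obtain ⟨e, heb⟩ := hD.exists_rel_of_mem_reflect_rel hQ st hcb hbα
    exact Finset.mem_image.2 ⟨(e, b), heb, rfl⟩
  · exact Finset.mem_image_of_mem Prod.snd hβ
  · intro h
    obtain ⟨⟨c, b⟩, hcb, rfl⟩ := Finset.mem_image.1 h
    exact hD.notMem_reflect_rel_right hQ st hα hβ c hcb

end IsReflectingCut

/-! ### Removing the branch relations -/

/-- Some sequence of reflections and coreflections lowers the number of relations. -/
def IsReducible (Q : QuivRel) : Prop :=
  ∃ Q', Nonempty (SigmaTau Q') ∧ IsTriangleAcyclic Q' ∧ RefEquiv Q Q' ∧ Q'.rel.card < Q.rel.card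

theorem IsReducible.of_opQR (h : IsReducible (opQR Q)) : IsReducible Q := by
  obtain ⟨Q', ⟨st'⟩, hQ', hequiv, hcard⟩ := h
  refine ⟨opQR Q', ⟨st'.op⟩, hQ'.op, ?_, ?_⟩
  · simpa only [opQR_opQR] using hequiv.op
  · rwa [card_opQR_rel, ← card_opQR_rel Q]

theorem IsReducible.of_refStep {Q' : QuivRel} (h : IsReducible Q') (hstep : RefStep Q Q')
    (hcard : Q'.rel.card ≤ Q.rel.card) : IsReducible Q := by
  obtain ⟨Q₂, hst, hQ₂, hequiv, hlt⟩ := h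
  exact ⟨Q₂, hst, hQ₂, .head hstep hequiv, hlt.trans_le hcard⟩

theorem IsCut.isReducible {α β : ℕ} {D : Finset ℕ} (hD : IsCut Q α D) (hQ : IsTriangleAcyclic Q)
    (st : SigmaTau Q) (hβ : (α, β) ∈ Q.rel) : IsReducible Q := by
  induction hn : D.card using Nat.strong_induction_on generalizing Q α β D with
  | _ n ih =>
  subst hn
  have hα : α ∈ Q.A := (hQ.composable α β hβ).1
  by_cases hfar : ∀ a b, (a, b) ∈ Q.rel → Q.src a ∈ D → InTriangle Q a
  swap
  · push Not at hfar
    obtain ⟨a, b, hab, haD, hn⟩ := hfar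
    obtain ⟨E, hED, hE | hE⟩ := hD.exists_ssubset hQ st hα hab haD hn
    · exact ih _ (Finset.card_lt_card hED) hE hQ st hab rfl
    · exact (ih _ (Finset.card_lt_card hED) hE hQ.op st.op (mem_opQR_rel.2 hab) rfl).of_opQR
  have hR : IsReflectingCut Q α D := ⟨hD, hα, fun b hb hbz => ⟨hb, hα, hbz, fun hbα =>
    hD.not_inTriangle <| (inTriangle_iff_of_rel st hQ.composable hbα).1 <|
      hfar b α hbα (hbz ▸ hD.tgt_mem)⟩⟩
  have hQ' := hQ.reflect st (hR.canReflect hQ)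
  have st' := hQ.reflectSigmaTau st (Q.tgt α)
  have hstep : RefStep Q (reflect st (Q.tgt α)) :=
    .inl ⟨_, hQ.isReflection st (hR.canReflect hQ)⟩
  by_cases hin : ∀ a ∈ Q.A, Q.tgt a = Q.tgt α → a = α
  swap
  · push Not at hin
    obtain ⟨a, ha, haz, haα⟩ := hin
    obtain ⟨hcard, hrel, E, hED, hE⟩ := hR.exists_isCut_reflect_of_tgt_eq hQ st hβ ha haα haz
    exact (ih _ (Finset.card_lt_card hED) hE hQ' st' hrel rfl).of_refStep hstep hcard
  by_cases hout : ∀ b ∈ Q.A, Q.src b ≠ Q.tgt α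
  · exact ⟨_, ⟨st'⟩, hQ', .single hstep, hR.card_reflect_rel_lt hQ st hin hout hβ⟩
  · push Not at hout
    obtain ⟨b, hb, hbz⟩ := hout
    obtain ⟨hcard, hrel, E, hED, hE⟩ := hR.exists_isCut_reflect_of_src_eq hQ st hin hβ hb hbz
    exact (ih _ (Finset.card_lt_card hED) hE hQ' st' hrel rfl).of_refStep hstep hcard

theorem IsTriangleAcyclic.exists_refEquiv_forall_inTriangle (hQ : IsTriangleAcyclic Q)
    (st : SigmaTau Q) : ∃ Q', Nonempty (SigmaTau Q') ∧ IsTriangleAcyclic Q' ∧ RefEquiv Q Q' ∧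
      ∀ a b, (a, b) ∈ Q'.rel → InTriangle Q' a := by
  induction hn : Q.rel.card using Nat.strong_induction_on generalizing Q with
  | _ n ih =>
  subst hn
  by_cases hall : ∀ a b, (a, b) ∈ Q.rel → InTriangle Q a
  · exact ⟨Q, ⟨st⟩, hQ, .refl, hall⟩
  push Not at hall
  obtain ⟨a, b, hab, hn⟩ := hall
  obtain ⟨D, hD⟩ := hQ.exists_isCut (hQ.composable a b hab).1 hn
  obtain ⟨Q₁, ⟨st₁⟩, hQ₁, hequiv₁, hcard⟩ := hD.isReducible hQ st hab
  obtain ⟨Q₂, hst₂, hQ₂, hequiv₂, hall₂⟩ := ih _ hcard hQ₁ st₁ rfl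
  exact ⟨Q₂, hst₂, hQ₂, hequiv₁.trans hequiv₂, hall₂⟩

theorem IsTriangleAcyclic.exists_isGentle_not_branchRel (hQ : IsTriangleAcyclic Q)
    (st : SigmaTau Q) : ∃ Q', IsGentle Q' ∧ (∀ ρ, ¬ BranchRel Q' ρ) ∧ RefEquiv Q Q' := by
  obtain ⟨Q', ⟨st'⟩, hQ', hequiv, hall⟩ := hQ.exists_refEquiv_forall_inTriangle st
  refine ⟨Q', hQ'.isGentle st', ?_, hequiv⟩
  rintro ⟨a, b⟩ ⟨hab, ha | hb⟩
  · exact not_branchArrow_of_inTriangle hQ'.connected (hall a b hab) ha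
  · exact not_branchArrow_of_inTriangle hQ'.connected
      ((inTriangle_iff_of_rel st' hQ'.composable hab).1 (hall a b hab)) hb

/-! ### Maximal antipaths -/

theorem eq_of_isChain_cons {α : Type*} {R : α → α → Prop} (hR : Relator.RightUnique R) {a : α}
    {l l' : List α} (hl : List.IsChain R (a :: l)) (hl' : List.IsChain R (a :: l'))
    (hmax : ∀ b, ¬ R ((a :: l).getLast (List.cons_ne_nil a l)) b)
    (hmax' : ∀ b, ¬ R ((a :: l').getLast (List.cons_ne_nil a l')) b) : l = l' := by
  induction l generalizing a l' with
  | nil =>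
    cases l' with
    | nil => rfl
    | cons y l' => exact absurd (List.isChain_cons_cons.1 hl').1 (hmax y)
  | cons x l ih =>
    cases l' with
    | nil => exact absurd (List.isChain_cons_cons.1 hl).1 (hmax' x)
    | cons y l' =>
      rw [List.isChain_cons_cons] at hl hl'
      obtain rfl := hR hl.1 hl'.1
      rw [ih hl.2 hl'.2 (by simpa using hmax) (by simpa using hmax')]

theorem IsGentle.relComposable (hQ : IsGentle Q) : RelComposable Q :=
  fun a b h => hQ.2.2.2.1 (a, b) h

theorem inN_arrows_iff (st : SigmaTau Q) (hc : RelComposable Q) {a : ℕ} {l : List ℕ} :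
    InN Q st (.arrows (a :: l)) ↔
      (∀ x ∈ a :: l, x ∈ Q.A) ∧ List.IsChain (fun x y => (x, y) ∈ Q.rel) (a :: l) ∧
        (∀ c, (c, a) ∉ Q.rel) ∧
        ∀ c, ((a :: l).getLast (List.cons_ne_nil a l), c) ∉ Q.rel := by
  have hhead : (∀ x ∈ a :: l, x ∈ Q.A) → ∀ c, (c, a) ∈ Q.rel ↔
      c ∈ Q.A ∧ Q.src c = Q.tgt a ∧ st.σ c = st.τ a := by
    intro hl c
    simp only [st.mem_rel_iff hc, hl a List.mem_cons_self, true_and, SigmaTau.outSide,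
      SigmaTau.inSide, Prod.mk.injEq]
  have hlast : (∀ x ∈ a :: l, x ∈ Q.A) → ∀ c, ((a :: l).getLast!, c) ∈ Q.rel ↔
      c ∈ Q.A ∧ Q.tgt c = Q.src (a :: l).getLast! ∧ st.τ c = st.σ (a :: l).getLast! := by
    intro hl c
    have hmem := hl (a :: l).getLast! (List.getLast_mem (List.cons_ne_nil a l))
    simp only [st.mem_rel_iff hc, hmem, true_and, SigmaTau.outSide, SigmaTau.inSide,
      Prod.mk.injEq, eq_comm]
  change (_ ∧ _) ∧ _ ∧ _ ↔ _ ∧ _ ∧ _ ∧ ∀ c, ((a :: l).getLast!, c) ∉ Q.rel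
  constructor
  · rintro ⟨⟨-, hl, hchain⟩, ht, hs⟩
    exact ⟨hl, hchain, fun c h => ht ⟨c, (hhead hl c).1 h⟩, fun c h => hs ⟨c, (hlast hl c).1 h⟩⟩
  · rintro ⟨hl, hchain, ht, hs⟩
    exact ⟨⟨List.cons_ne_nil a l, hl, hchain⟩, fun ⟨c, h⟩ => ht c ((hhead hl c).2 h),
      fun ⟨c, h⟩ => hs c ((hlast hl c).2 h)⟩

/-- The side of its target at which an antipath ends. -/
def Thread.inSide (st : SigmaTau Q) (w : Thread) : ℕ × ℤ :=
  (w.target Q, w.tauAnti st)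

theorem injOn_inSide_inN (st : SigmaTau Q) (hc : RelComposable Q) :
    Set.InjOn (Thread.inSide st) {w | InN Q st w} := by
  have hnil : ¬ InN Q st (.arrows []) := fun h => h.1.1 rfl
  have htriv : ∀ {x ε a l}, InN Q st (.triv x ε) → InN Q st (.arrows (a :: l)) →
      st.inSide a ≠ (x, ε) := fun {x ε a l} hx ha h =>
    hx.2.2 ⟨a, ((inN_arrows_iff st hc).1 ha).1 a List.mem_cons_self, congrArg Prod.fst h,
      congrArg Prod.snd h⟩
  rintro (⟨x, ε⟩ | (_ | ⟨a, l⟩)) hw (⟨y, δ⟩ | (_ | ⟨b, l'⟩)) hw' h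
  · obtain ⟨rfl, rfl⟩ := Prod.mk.inj h
    rfl
  · exact (hnil hw').elim
  · exact (htriv hw hw' h.symm).elim
  · exact (hnil hw).elim
  · exact (hnil hw).elim
  · exact (hnil hw).elim
  · exact (htriv hw' hw h).elim
  · exact (hnil hw').elim
  · obtain ⟨hl, hchain, -, hlast⟩ := (inN_arrows_iff st hc).1 hw
    obtain ⟨hl', hchain', -, hlast'⟩ := (inN_arrows_iff st hc).1 hw'
    obtain rfl := st.inSide_injOn (hl a List.mem_cons_self) (hl' b List.mem_cons_self) h
    have hR : Relator.RightUnique fun x y => (x, y) ∈ Q.rel := fun _ _ _ => st.rel_right_unique hc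
    rw [eq_of_isChain_cons hR hchain hchain' hlast hlast']

theorem inSide_mem_of_inN (st : SigmaTau Q) (hV : ∀ a ∈ Q.A, Q.tgt a ∈ Q.V) {w : Thread}
    (hw : InN Q st w) : w.inSide st ∈ sides Q \ Q.A.image st.outSide := by
  rw [Finset.mem_sdiff, Finset.mem_image]
  refine ⟨?_, fun ⟨a, ha, h⟩ => hw.2.1 ⟨a, ha, congrArg Prod.fst h, congrArg Prod.snd h⟩⟩
  obtain ⟨x, ε⟩ | (_ | ⟨a, l⟩) := w
  · exact mem_sides.2 hw.1
  · exact (hw.1.1 rfl).elim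
  · have ha := hw.1.2.1 a List.mem_cons_self
    exact st.inSide_mem_sides ha (hV a ha)

theorem IsGentle.finite_inN (hQ : IsGentle Q) (st : SigmaTau Q) : {w | InN Q st w}.Finite :=
  .of_injOn (fun _ => inSide_mem_of_inN st fun a ha => (hQ.2.1 a ha).2)
    (injOn_inSide_inN st hQ.relComposable) (Finset.finite_toSet _)

theorem IsGentle.ncard_inN_add_card_le (hQ : IsGentle Q) (st : SigmaTau Q) :
    {w | InN Q st w}.ncard + Q.A.card ≤ 2 * Q.V.card := by
  have hsub : Q.A.image st.outSide ⊆ sides Q := Finset.image_subset_iff.2 fun a ha =>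
    st.outSide_mem_sides ha (hQ.2.1 a ha).1
  have hle := Set.ncard_le_ncard_of_injOn (s := {w | InN Q st w}) _
    (fun _ => inSide_mem_of_inN st fun a ha => (hQ.2.1 a ha).2)
    (injOn_inSide_inN st hQ.relComposable) (Finset.finite_toSet _)
  have hout := Finset.card_le_card hsub
  rw [Set.ncard_coe_finset, Finset.card_sdiff_of_subset hsub] at hle
  rw [Finset.card_image_of_injOn st.outSide_injOn, card_sides] at hle hout
  omega

/-! ### Arrows outside all maximal antipaths -/

theorem InC.of_rel {st : SigmaTau Q} (hc : RelComposable Q) {a b : ℕ} (ha : InC Q st a)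
    (hab : (a, b) ∈ Q.rel) : InC Q st b := by
  refine ⟨(hc a b hab).2.1, ?_⟩
  rintro ⟨l, hl, hb⟩
  obtain ⟨l₁, l₂, rfl⟩ := List.append_of_mem hb
  obtain rfl | ⟨l₁, c, rfl⟩ := List.eq_nil_or_concat' l₁
  · exact ((inN_arrows_iff st hc).1 hl).2.2.1 a hab
  · have hchain : List.IsChain (fun x y => (x, y) ∈ Q.rel) (l₁ ++ [c] ++ b :: l₂) := hl.1.2.2
    rw [List.append_assoc] at hchain
    have hcb := (List.isChain_append_cons_cons.1 hchain).2.1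
    obtain rfl := st.rel_left_unique hc hab hcb
    exact ha.2 ⟨_, hl, by simp⟩

theorem InC.exists_rel_left {st : SigmaTau Q} (hc : RelComposable Q) {a b : ℕ}
    (ha : InC Q st a) (hmax : ∀ c, (a, c) ∉ Q.rel)
    (hba : Relation.ReflTransGen (fun x y => (x, y) ∈ Q.rel) b a) : ∃ c, (c, b) ∈ Q.rel := by
  by_contra! hb
  obtain ⟨l, hl, hlast⟩ := List.exists_isChain_cons_of_relationReflTransGen hba
  have hmem : ∀ x ∈ b :: l, x ∈ Q.A :=
    hl.backwards_cons_induction (· ∈ Q.A) l hlast (fun x y hxy _ => (hc x y hxy).1) ha.1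
  refine ha.2 ⟨b :: l, (inN_arrows_iff st hc).2 ⟨hmem, hl, hb, by rwa [hlast]⟩, ?_⟩
  exact hlast ▸ List.getLast_mem _

theorem InC.exists_rel {st : SigmaTau Q} (hc : RelComposable Q) {a : ℕ} (ha : InC Q st a) :
    ∃ b, (a, b) ∈ Q.rel := by
  classical
  by_contra! hmax
  let R x y := (x, y) ∈ Q.rel
  let P := Q.A.filter fun b => Relation.ReflTransGen R b a
  have hex : ∀ b ∈ P, ∃ c, R c b := fun b hb =>
    ha.exists_rel_left hc hmax (Finset.mem_filter.1 hb).2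
  choose! pred hpred using hex
  have hmaps : Set.MapsTo pred P P := fun b hb => Finset.mem_coe.2 <| Finset.mem_filter.2
    ⟨(hc _ _ (hpred b hb)).1, .head (hpred b hb) (Finset.mem_filter.1 hb).2⟩
  have hinj : Set.InjOn pred P := fun b hb c hc' h =>
    st.rel_right_unique hc (hpred b hb) (h ▸ hpred c hc')
  obtain ⟨b, hb, rfl⟩ := Finset.surjOn_of_injOn_of_card_le pred hmaps hinj le_rfl
    (Finset.mem_filter.2 ⟨ha.1, .refl⟩)
  exact hmax b (hpred b hb)

/-! ### Orbits -/

theorem mem_iff_mem_of_eqvGen {α : Type*} {r : α → α → Prop} {S : Set α}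
    (hS : ∀ a b, r a b → (a ∈ S ↔ b ∈ S)) {a b : α} (hab : Relation.EqvGen r a b) :
    a ∈ S ↔ b ∈ S :=
  (Equivalence.eqvGen_iff (r := fun a b => a ∈ S ↔ b ∈ S)
    ⟨fun _ => .rfl, Iff.symm, Iff.trans⟩).1 (Relation.EqvGen.mono hS a b hab)

theorem NOrbit.subset {st : SigmaTau Q} {O : Set Thread} (hO : NOrbit Q st O) :
    O ⊆ {w | InN Q st w} := by
  obtain ⟨w, hw, rfl⟩ := hO
  intro w' hw'
  exact (mem_iff_mem_of_eqvGen (S := {w | InN Q st w})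
    (fun _ _ h => iff_of_true h.1 h.2.1) hw').1 hw

namespace COrbit

variable {st : SigmaTau Q} {O O' : Set ℕ} {a b : ℕ}

theorem subset_of_mem (hO : COrbit Q st O) {S : Set ℕ}
    (hS : ∀ a b, PsiRel Q st a b → (a ∈ S ↔ b ∈ S)) (ha : a ∈ O) (haS : a ∈ S) : O ⊆ S := by
  obtain ⟨c, -, rfl⟩ := hO
  intro b hb
  exact (mem_iff_mem_of_eqvGen hS hb).1 ((mem_iff_mem_of_eqvGen hS ha).2 haS)

theorem subset_inC (hO : COrbit Q st O) : O ⊆ {a | InC Q st a} := by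
  obtain ⟨c, hc, rfl⟩ := id hO
  exact hO.subset_of_mem (fun _ _ h => iff_of_true h.1 h.2.1) (.refl c) hc

theorem mem_of_psiRel (hO : COrbit Q st O) (ha : a ∈ O) (hab : PsiRel Q st a b) : b ∈ O := by
  obtain ⟨c, -, rfl⟩ := hO
  exact .trans _ _ _ ha (.rel _ _ hab)

theorem eq_of_mem (hO : COrbit Q st O) (hO' : COrbit Q st O') (ha : a ∈ O) (ha' : a ∈ O') :
    O = O' := by
  have hle : ∀ {O O' : Set ℕ}, COrbit Q st O → COrbit Q st O' → a ∈ O → a ∈ O' → O ⊆ O' := by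
    rintro O _ hO ⟨c, -, rfl⟩ ha ha'
    exact hO.subset_of_mem (fun x y hxy => ⟨fun hx => .trans _ _ _ hx (.rel _ _ hxy),
      fun hy => .trans _ _ _ hy (.symm _ _ (.rel _ _ hxy))⟩) ha ha'
  exact (hle hO hO' ha ha').antisymm (hle hO' hO ha' ha)

theorem exists_rel (hc : RelComposable Q) (hO : COrbit Q st O) (ha : a ∈ O) :
    ∃ b ∈ O, (a, b) ∈ Q.rel := by
  have haC := hO.subset_inC ha
  obtain ⟨b, hab⟩ := haC.exists_rel hc
  have hside := ((st.mem_rel_iff hc).1 hab).2.2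
  exact ⟨b, hO.mem_of_psiRel ha ⟨haC, haC.of_rel hc hab, (congrArg Prod.fst hside).symm,
    (congrArg Prod.snd hside).symm⟩, hab⟩

theorem subset_of_rel (hc : RelComposable Q) (hO : COrbit Q st O) {S : Set ℕ}
    (hS : ∀ a b, (a, b) ∈ Q.rel → (a ∈ S ↔ b ∈ S)) (ha : a ∈ O) (haS : a ∈ S) : O ⊆ S :=
  hO.subset_of_mem (fun x y hxy => hS x y <| (st.mem_rel_iff hc).2
    ⟨hxy.1.1, hxy.2.1.1, Prod.ext hxy.2.2.1.symm hxy.2.2.2.symm⟩) ha haS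

theorem exists_isTriangleTriple (hc : RelComposable Q) (hO : COrbit Q st O) (hcard : O.ncard = 3) :
    ∃ a b c, IsTriangleTriple Q a b c ∧ O = ↑({a, b, c} : Finset ℕ) := by
  have hright : ∀ {x y z}, (x, y) ∈ Q.rel → (x, z) ∈ Q.rel → y = z := st.rel_right_unique hc
  have hleft : ∀ {x y z}, (x, z) ∈ Q.rel → (y, z) ∈ Q.rel → x = y := st.rel_left_unique hc
  have hfin : O.Finite := Set.finite_of_ncard_pos (by omega)
  obtain ⟨a, ha⟩ : O.Nonempty := Set.nonempty_of_ncard_ne_zero (by omega)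
  obtain ⟨b, hb, hab⟩ := hO.exists_rel hc ha
  obtain ⟨c, hcO, hbc⟩ := hO.exists_rel hc hb
  obtain ⟨d, hd, hcd⟩ := hO.exists_rel hc hcO
  have hsmall : ∀ S : Finset ℕ, a ∈ S → S.card ≤ 2 →
      ¬ ∀ x y, (x, y) ∈ Q.rel → (x ∈ S ↔ y ∈ S) := by
    intro S haS hS hclosed
    have := Set.ncard_le_ncard (hO.subset_of_rel hc (S := S) hclosed ha haS) S.finite_toSet
    rw [Set.ncard_coe_finset] at this
    omega
  have hne_ab : a ≠ b := by
    rintro rfl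
    refine hsmall {a} (by simp) (by simp) fun x y hxy => ?_
    simp only [Finset.mem_singleton]
    grind
  have hne_bc : b ≠ c := by
    rintro rfl
    exact hne_ab (hleft hab hbc)
  have hne_ac : a ≠ c := by
    rintro rfl
    refine hsmall {a, b} (by simp) Finset.card_le_two fun x y hxy => ?_
    simp only [Finset.mem_insert, Finset.mem_singleton]
    grind
  have hO_eq : ↑({a, b, c} : Finset ℕ) = O := by
    refine Set.eq_of_subset_of_ncard_le (by simp [Set.insert_subset_iff, *]) ?_ hfin
    rw [Set.ncard_coe_finset, hcard, Finset.card_eq_three.2 ⟨a, b, c, hne_ab, hne_ac, hne_bc, rfl⟩]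
  have hda : d = a := by
    have hd' : d = a ∨ d = b ∨ d = c := by simpa using hO_eq.ge hd
    obtain rfl | rfl | rfl := hd'
    · rfl
    · exact (hne_ac (hleft hab hcd)).elim
    · exact (hne_bc (hleft hbc hcd)).elim
  exact ⟨a, b, c, hc.isTriangleTriple hne_ab hne_bc hne_ac hab hbc (hda ▸ hcd), hO_eq.symm⟩

end COrbit

/-! ### The invariant of the class `𝒜` -/

theorem forall_eq_and_ncard_eq {α β : Type*} [DecidableEq β] {S : Set α} (hS : S.Finite)
    {v : α → β} {x₀ : β} {k : ℕ}
    (h : ∀ x, {O | O ∈ S ∧ v O = x}.ncard = if x = x₀ then k else 0) :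
    (∀ O ∈ S, v O = x₀) ∧ S.ncard = k := by
  have hval : ∀ O ∈ S, v O = x₀ := by
    intro O hO
    have hpos : 0 < {O' | O' ∈ S ∧ v O' = v O}.ncard :=
      (Set.ncard_pos (hS.subset fun _ h => h.1)).2 ⟨O, hO, rfl⟩
    rw [h] at hpos
    by_contra hne
    simp [hne] at hpos
  refine ⟨hval, ?_⟩
  have hx₀ := h x₀
  rwa [if_pos rfl, Set.sep_eq_self_iff_mem_true.2 hval] at hx₀

section

variable {st : SigmaTau Q} {m p : ℕ}

theorem finite_setOf_cOrbit (st : SigmaTau Q) : {O | COrbit Q st O}.Finite :=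
  Q.A.finite_toSet.finite_subsets.subset fun _ hO _ ha => (hO.subset_inC ha).1

theorem IsGentle.finite_setOf_nOrbit (hQ : IsGentle Q) (st : SigmaTau Q) :
    {O | NOrbit Q st O}.Finite :=
  (hQ.finite_inN st).finite_subsets.subset fun _ hO => hO.subset

theorem NOrbit.pN_pos (hQ : IsGentle Q) {O : Set Thread} (hO : NOrbit Q st O) : 0 < pN O := by
  have hfin := (hQ.finite_inN st).subset hO.subset
  obtain ⟨w, -, rfl⟩ := hO
  exact (Set.ncard_pos hfin).2 ⟨w, .refl w⟩

theorem IsGentle.fInv_zero (hQ : IsGentle Q) (st : SigmaTau Q) (q : ℕ) :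
    fInv Q st (0, q) = {O | COrbit Q st O ∧ O.ncard = q}.ncard := by
  have hempty : {O | NOrbit Q st O ∧ pN O = 0 ∧ qN O = q} = ∅ :=
    Set.eq_empty_of_forall_notMem fun O hO => (hO.1.pN_pos hQ).ne' hO.2.1
  simp [fInv, hempty]

theorem IsGentle.ncard_cOrbit (hQ : IsGentle Q)
    (hf : ∀ x, fInv Q st x = m * charFn 0 3 x + charFn (p + m + 2) p x) :
    (∀ O, COrbit Q st O → O.ncard = 3) ∧ {O | COrbit Q st O}.ncard = m := by
  refine forall_eq_and_ncard_eq (finite_setOf_cOrbit st) fun q => ?_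
  have := hf (0, q)
  rw [hQ.fInv_zero] at this
  simpa [charFn] using this

theorem IsGentle.nOrbit_ncard_eq_one (hQ : IsGentle Q)
    (hf : ∀ x, fInv Q st x = m * charFn 0 3 x + charFn (p + m + 2) p x) :
    (∀ O, NOrbit Q st O → (pN O, qN O) = (p + m + 2, p)) ∧ {O | NOrbit Q st O}.ncard = 1 := by
  refine forall_eq_and_ncard_eq (hQ.finite_setOf_nOrbit st) fun x => ?_
  obtain ⟨_ | k, q⟩ := x
  · have hempty : {O | NOrbit Q st O ∧ (pN O, qN O) = (0, q)} = ∅ :=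
      Set.eq_empty_of_forall_notMem fun O hO => (hO.1.pN_pos hQ).ne' (congrArg Prod.fst hO.2)
    simpa using congrArg Set.ncard hempty
  · simpa [fInv, charFn] using hf (k + 1, q)

theorem IsGentle.ncard_inN (hQ : IsGentle Q)
    (hf : ∀ x, fInv Q st x = m * charFn 0 3 x + charFn (p + m + 2) p x) :
    {w | InN Q st w}.ncard = p + m + 2 ∧ ∑ᶠ w ∈ {w | InN Q st w}, w.len = p := by
  obtain ⟨hval, hone⟩ := hQ.nOrbit_ncard_eq_one hf
  obtain ⟨O, hO⟩ := Set.ncard_eq_one.1 hone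
  have hmem : NOrbit Q st O := hO.symm.subset rfl
  have heq : {w | InN Q st w} = O := by
    refine Set.Subset.antisymm (fun w hw => ?_) hmem.subset
    have hw' : {w' | Relation.EqvGen (PhiRel Q st) w w'} = O := hO.subset ⟨w, hw, rfl⟩
    exact hw' ▸ .refl w
  exact heq ▸ Prod.mk.inj (hval O hmem)

end

/-! ### Counting the first cohomology -/

theorem exact_of_finrank_add_le {K M N P : Type*} [Field K] [AddCommGroup M] [Module K M]
    [AddCommGroup N] [Module K N] [AddCommGroup P] [Module K P] [FiniteDimensional K M]
    [FiniteDimensional K N] {f : M →ₗ[K] N} {g : N →ₗ[K] P} (hgf : g ∘ₗ f = 0)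
    (hg : Function.Surjective g)
    (hdim : Module.finrank K N + Module.finrank K (LinearMap.ker f) ≤
      Module.finrank K M + Module.finrank K P) :
    Function.Exact f g := by
  have hf := f.finrank_range_add_finrank_ker
  have hg' := g.finrank_range_add_finrank_ker
  rw [LinearMap.range_eq_top.2 hg, finrank_top] at hg'
  exact LinearMap.exact_iff.2 <| .symm <|
    Submodule.eq_of_le_of_finrank_le (LinearMap.range_le_ker_iff.2 hgf) (by omega)

/-- The simplicial coboundary `f ↦ f ∘ src + f ∘ tgt` of the underlying graph, with coefficients in
`ℤ/2`. -/
noncomputable def coboundary (Q : QuivRel) : (Q.V → ZMod 2) →ₗ[ZMod 2] (Q.A → ZMod 2) :=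
  LinearMap.funLeft (ZMod 2) (ZMod 2) Subtype.val ∘ₗ
    (LinearMap.funLeft (ZMod 2) (ZMod 2) Q.src + LinearMap.funLeft (ZMod 2) (ZMod 2) Q.tgt) ∘ₗ
      Function.ExtendByZero.linearMap (ZMod 2) Subtype.val

/-- The sums of an arrow labelling over the members of a family of sets of arrows. -/
noncomputable def blockSums (Q : QuivRel) (T : Finset (Finset ℕ)) :
    (Q.A → ZMod 2) →ₗ[ZMod 2] (T → ZMod 2) :=
  LinearMap.pi fun O => (∑ a ∈ O.1, LinearMap.proj a) ∘ₗ
    Function.ExtendByZero.linearMap (ZMod 2) Subtype.val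

theorem coboundary_apply (f : Q.V → ZMod 2) (a : Q.A) :
    coboundary Q f a =
      Function.extend Subtype.val f 0 (Q.src a) + Function.extend Subtype.val f 0 (Q.tgt a) :=
  rfl

theorem extend_val_restrict {S : Finset ℕ} (g : ℕ → ZMod 2) {a : ℕ} (ha : a ∈ S) :
    Function.extend Subtype.val (fun b : S => g b) 0 a = g a :=
  Subtype.val_injective.extend_apply (fun b : S => g b) 0 ⟨a, ha⟩

theorem blockSums_restrict {T : Finset (Finset ℕ)} (hT : ∀ O ∈ T, O ⊆ Q.A) (g : ℕ → ZMod 2)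
    (O : T) : blockSums Q T (fun a => g a) O = ∑ a ∈ O.1, g a := by
  simp only [blockSums, LinearMap.pi_apply, LinearMap.comp_apply, LinearMap.sum_apply,
    LinearMap.proj_apply, Function.ExtendByZero.linearMap_apply]
  exact Finset.sum_congr rfl fun a ha => extend_val_restrict g (hT O O.2 ha)

theorem blockSums_surjective {T : Finset (Finset ℕ)} (hT : ∀ O ∈ T, O ⊆ Q.A)
    (hne : ∀ O ∈ T, O.Nonempty) (hdisj : (T : Set (Finset ℕ)).PairwiseDisjoint id) :
    Function.Surjective (blockSums Q T) := by
  intro k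
  choose rep hrep using fun O : T => hne O.1 O.2
  have heq : ∀ {O O' : T}, rep O' ∈ O.1 → O' = O := fun {O O'} h =>
    Subtype.ext <| hdisj.elim_finset O'.2 O.2 _ (hrep O') h
  have hinj : Function.Injective rep := fun O O' h => heq (h ▸ hrep O')
  refine ⟨fun a => Function.extend rep k 0 a, funext fun O => ?_⟩
  rw [blockSums_restrict hT, Finset.sum_eq_single_of_mem _ (hrep O), hinj.extend_apply]
  intro a ha hne
  refine Function.extend_apply' _ _ _ ?_
  rintro ⟨O', rfl⟩
  exact hne (congrArg rep (heq ha))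

theorem finrank_ker_coboundary_le_one (hV : Q.V.Nonempty) (hconn : Connected Q) :
    Module.finrank (ZMod 2) (LinearMap.ker (coboundary Q)) ≤ 1 := by
  obtain ⟨x₀, hx₀⟩ := hV
  let eval : LinearMap.ker (coboundary Q) →ₗ[ZMod 2] ZMod 2 :=
    LinearMap.proj ⟨x₀, hx₀⟩ ∘ₗ Submodule.subtype _
  have heval : Function.Injective eval := by
    rw [← LinearMap.ker_eq_bot, LinearMap.ker_eq_bot']
    rintro ⟨f, hf⟩ (hf₀ : f ⟨x₀, hx₀⟩ = 0)
    let F : ℕ → ZMod 2 := Function.extend Subtype.val f 0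
    have hF : ∀ x : Q.V, F x = f x := Subtype.val_injective.extend_apply f 0
    have hclosed : ArrowClosed Q {x | F x = 0} := fun a ha => by
      have hsum : F (Q.src a) + F (Q.tgt a) = 0 :=
        (coboundary_apply f ⟨a, ha⟩).symm.trans (congrFun (LinearMap.mem_ker.1 hf) ⟨a, ha⟩)
      rw [Set.mem_ofPred_eq, Set.mem_ofPred_eq, CharTwo.add_eq_zero.1 hsum]
    have hzero := connected_iff_forall_arrowClosed.1 hconn _ hclosed
      ⟨x₀, (hF ⟨x₀, hx₀⟩).trans hf₀, hx₀⟩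
    exact Subtype.ext <| funext fun x => (hF x).symm.trans (hzero x.2)
  exact (LinearMap.finrank_le_finrank_of_injective heval).trans (Module.finrank_self _).le

namespace TriangleSet

variable {O : Finset ℕ}

theorem subset (hO : TriangleSet Q O) : O ⊆ Q.A := by
  obtain ⟨a, b, c, rfl, h⟩ := hO
  simp [Finset.insert_subset_iff, h.mem, h.rotate.mem, h.rotate.rotate.mem]

theorem card_eq (hO : TriangleSet Q O) : O.card = 3 := by
  obtain ⟨a, b, c, rfl, h⟩ := hO
  exact Finset.card_eq_three.2 ⟨a, b, c, h.ne, h.rotate.rotate.ne.symm, h.rotate.ne, rfl⟩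

theorem sum_eq_zero (hO : TriangleSet Q O) {g : ℕ → ZMod 2} (hg : IsCocycle Q g) :
    ∑ a ∈ O, g a = 0 := by
  obtain ⟨a, b, c, rfl, h⟩ := hO
  rw [Finset.sum_insert (by simp [h.ne, h.rotate.rotate.ne.symm]), Finset.sum_pair h.rotate.ne,
    ← add_assoc]
  exact hg a b c h

end TriangleSet

theorem isCocycle_src_add_tgt (f : ℕ → ZMod 2) :
    IsCocycle Q fun a => f (Q.src a) + f (Q.tgt a) := by
  intro a b c h
  beta_reduce
  rw [h.src_eq_tgt, h.rotate.src_eq_tgt, h.rotate.rotate.src_eq_tgt]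
  grind

theorem exists_isPotential (hV : Q.V.Nonempty) (hconn : Connected Q) {T : Finset (Finset ℕ)}
    (hT : ∀ O ∈ T, TriangleSet Q O) (hdisj : (T : Set (Finset ℕ)).PairwiseDisjoint id)
    (hcard : Q.A.card + 1 ≤ Q.V.card + T.card) {g : ℕ → ZMod 2} (hg : IsCocycle Q g) :
    ∃ f, IsPotential Q f g := by
  have hsub : ∀ O ∈ T, O ⊆ Q.A := fun O hO => (hT O hO).subset
  have hcomp : blockSums Q T ∘ₗ coboundary Q = 0 := LinearMap.ext fun f => funext fun O =>
    (blockSums_restrict hsub _ O).trans ((hT O O.2).sum_eq_zero (isCocycle_src_add_tgt _))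
  have hsurj := blockSums_surjective hsub
    (fun O hO => Finset.card_pos.1 ((hT O hO).card_eq ▸ by simp)) hdisj
  have hexact : Function.Exact (coboundary Q) (blockSums Q T) := by
    refine exact_of_finrank_add_le hcomp hsurj ?_
    have := finrank_ker_coboundary_le_one hV hconn
    simp only [Module.finrank_fintype_fun_eq_card, Fintype.card_coe]
    omega
  obtain ⟨f, hf⟩ := (hexact fun a => g a).1 <| funext fun O =>
    (blockSums_restrict hsub g O).trans ((hT O O.2).sum_eq_zero hg)
  exact ⟨Function.extend Subtype.val f 0, fun a ha =>
    (coboundary_apply f ⟨a, ha⟩).symm.trans (congrFun hf ⟨a, ha⟩)⟩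

section

variable {st : SigmaTau Q} {m p : ℕ}

/-- The arrow sets of the orbits in `𝒞/ℤ`. -/
noncomputable def cOrbits (st : SigmaTau Q) : Finset (Finset ℕ) :=
  open Classical in Q.A.powerset.filter fun O => COrbit Q st O

theorem mem_cOrbits {O : Finset ℕ} : O ∈ cOrbits st ↔ COrbit Q st O := by
  simp only [cOrbits, Finset.mem_filter, Finset.mem_powerset, and_iff_right_iff_imp]
  exact fun hO a ha => (hO.subset_inC ha).1

theorem image_coe_cOrbits (st : SigmaTau Q) :
    (↑) '' (cOrbits st : Set (Finset ℕ)) = {O : Set ℕ | COrbit Q st O} := by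
  refine Set.Subset.antisymm (Set.image_subset_iff.2 fun O hO => mem_cOrbits.1 hO) fun O hO => ?_
  lift O to Finset ℕ using Q.A.finite_toSet.subset fun a ha => (hO.subset_inC ha).1
  exact ⟨O, mem_cOrbits.2 hO, rfl⟩

theorem card_cOrbits (st : SigmaTau Q) : (cOrbits st).card = {O | COrbit Q st O}.ncard := by
  rw [← image_coe_cOrbits, Set.ncard_image_of_injective _ Finset.coe_injective,
    Set.ncard_coe_finset]

theorem pairwiseDisjoint_cOrbits (st : SigmaTau Q) :
    (cOrbits st : Set (Finset ℕ)).PairwiseDisjoint id := by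
  intro O hO O' hO' hne
  rw [Function.onFun, id, id, Finset.disjoint_left]
  exact fun a ha ha' => hne <| Finset.coe_injective <|
    (mem_cOrbits.1 hO).eq_of_mem (mem_cOrbits.1 hO') ha ha'

/-- The set of arrows of a thread. -/
def Thread.arrowSet : Thread → Finset ℕ
  | .triv _ _ => ∅
  | .arrows l => l.toFinset

theorem Thread.card_arrowSet_le : ∀ w : Thread, w.arrowSet.card ≤ w.len
  | .triv _ _ => le_rfl
  | .arrows l => l.toFinset_card_le

theorem arrows_subset_biUnion (hN : {w | InN Q st w}.Finite) :
    Q.A ⊆ hN.toFinset.biUnion Thread.arrowSet ∪ (cOrbits st).biUnion id := by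
  intro a ha
  rw [Finset.mem_union, Finset.mem_biUnion, Finset.mem_biUnion]
  by_cases haC : InC Q st a
  · obtain ⟨O, hO, hOa⟩ := (image_coe_cOrbits st).ge ⟨a, haC, rfl⟩
    exact .inr ⟨O, hO, Finset.mem_coe.1 <| hOa ▸ .refl a⟩
  · obtain ⟨l, hl, hal⟩ := not_not.1 fun h => haC ⟨ha, h⟩
    exact .inl ⟨.arrows l, hN.mem_toFinset.2 hl, List.mem_toFinset.2 hal⟩

theorem IsGentle.triangleSet_of_mem_cOrbits (hQ : IsGentle Q)
    (hf : ∀ x, fInv Q st x = m * charFn 0 3 x + charFn (p + m + 2) p x) {O : Finset ℕ}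
    (hO : O ∈ cOrbits st) : TriangleSet Q O := by
  rw [mem_cOrbits] at hO
  obtain ⟨a, b, c, h, hOabc⟩ :=
    hO.exists_isTriangleTriple hQ.relComposable ((hQ.ncard_cOrbit hf).1 O hO)
  exact ⟨a, b, c, Finset.coe_injective hOabc, h⟩

theorem IsGentle.card_arrows_le (hQ : IsGentle Q)
    (hf : ∀ x, fInv Q st x = m * charFn 0 3 x + charFn (p + m + 2) p x) :
    Q.A.card ≤ p + m * 3 := by
  have hN := hQ.finite_inN st
  have hthreads : (hN.toFinset.biUnion Thread.arrowSet).card ≤ p :=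
    calc (hN.toFinset.biUnion Thread.arrowSet).card
      _ ≤ ∑ w ∈ hN.toFinset, w.arrowSet.card := Finset.card_biUnion_le
      _ ≤ ∑ w ∈ hN.toFinset, w.len := Finset.sum_le_sum fun w _ => w.card_arrowSet_le
      _ = p := by rw [← finsum_mem_eq_finite_toFinset_sum _ hN, (hQ.ncard_inN hf).2]
  have horbits : ((cOrbits st).biUnion id).card ≤ m * 3 := by
    rw [← (hQ.ncard_cOrbit hf).2, ← card_cOrbits]
    exact Finset.card_biUnion_le_card_mul _ _ _ fun O hO =>
      (hQ.triangleSet_of_mem_cOrbits hf hO).card_eq.le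
  calc Q.A.card
    _ ≤ _ := Finset.card_le_card (arrows_subset_biUnion hN)
    _ ≤ _ := Finset.card_union_le _ _
    _ ≤ p + m * 3 := add_le_add hthreads horbits

theorem ClassA.isTriangleAcyclic (hA : ClassA Q st) : IsTriangleAcyclic Q := by
  obtain ⟨hQ, m, p, hf⟩ := hA
  have hN := hQ.ncard_inN_add_card_le st
  rw [(hQ.ncard_inN hf).1] at hN
  have harrows := hQ.card_arrows_le hf
  have hcard : Q.A.card + 1 ≤ Q.V.card + (cOrbits st).card := by
    rw [card_cOrbits, (hQ.ncard_cOrbit hf).2]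
    omega
  exact
    { ends_mem := hQ.2.1
      connected := hQ.2.2.1
      composable := hQ.relComposable
      card_lt := by omega
      exists_potential := fun g hg => exists_isPotential hQ.1 hQ.2.2.1
        (fun O => hQ.triangleSet_of_mem_cOrbits hf) (pairwiseDisjoint_cOrbits st) hcard hg }

end

/-- Every `𝚫 ∈ 𝒜` is reflection-equivalent to a gentle
quiver without branch relations. -/
theorem stmt12 (Q : QuivRel) (st : SigmaTau Q) (hA : ClassA Q st) :
    ∃ Q' : QuivRel, IsGentle Q' ∧ (∀ ρ : ℕ × ℕ, ¬ BranchRel Q' ρ) ∧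
      RefEquiv Q Q' :=
  hA.isTriangleAcyclic.exists_isGentle_not_branchRel st

end GentleQuiv
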